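/- arXiv:1311.5481 — 4 statements merged into one kernel-verified Lean document; each statement's English description precedes it below -/
import Mathlib

section
/- Let G = (V, E) be a finite simple bipartite graph with edge colors, integer color bounds w_j ≥ 1, and edge profits p : E → ℚ≥0. Let x : E → [0, 1] satisfy Σ_{e∈δ(v)} x_e ≤ 1 for all v ∈ V and Σ_{e∈E_j} x_e ≤ w_j for all colors j. Then there exists a matching M ⊆ E such that Σ_{e∈M} p_e ≥ (1/2) · Σ_{e∈E} p_e x_e and |M ∩ E_j| ≤ w_j + 1 for every color j. -/
/-!
Splitting color `j` into `w j` slots and each edge `e` into one copy per slot of its color turns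
the problem into matching in a 3-partite 3-uniform hypergraph: a copy is a triple (endpoint in `A`,
endpoint outside `A`, slot). Giving each copy of `e` the weight `x e / w (c e)` yields a fractional
matching of the same profit. An integral hypergraph matching uses at most one copy of each edge,
and at most `w j` edges of color `j`, so it suffices to know that the fractional matching LP of a
3-partite hypergraph has integrality gap at most `3 - 1 = 2` (`exists_matching`); the resulting
matching in fact respects the color bounds without the extra `1`.

The gap bound is the argument of Füredi–Kahn–Seymour and Chan–Lau. In an extreme point `y` with full
support, the constraints of the tight vertices determine `y` (`eq_zero_of_extreme`), so there are
at least as many tight vertices as edges. If all tight vertices had degree at least 3, counting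
incidences would force every vertex of every edge to be tight and the tight constraints to form a
square nonsingular system; but the constraints of each side sum to the same all-ones row, a
contradiction. So some tight vertex has degree at most 2, and carries an edge `e` with
`y e ≥ 1/2`, whence the edges meeting `e` (including `e`) have total weight at most
`3 - 2 * (1/2) = 2` (`exists_light_edge`). The local ratio method now finishes: subtract `p e` from
the profit of every edge meeting `e`, which lowers the LP profit by at most `2 * p e`, solve
recursively without `e`, and add `e` if it is disjoint from the matching obtained. Either way some
edge meeting `e` is used, which gains at least `p e`.
-/

/-- A set of edges (as unordered pairs) is a matching if its edges are pairwise
vertex-disjoint. -/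
def IsMatchingSet {V : Type*} (M : Finset (Sym2 V)) : Prop :=
  ∀ e ∈ M, ∀ f ∈ M, e ≠ f → ∀ v : V, v ∈ e → v ∉ f

/-- A graph is bipartite if there is a set of vertices such that every edge has exactly
one endpoint inside it. -/
def IsBipartiteGraph {V : Type*} (G : SimpleGraph V) : Prop :=
  ∃ A : Set V, ∀ ⦃u v : V⦄, G.Adj u v → (u ∈ A ↔ v ∉ A)

open Finset

/-! ### Fractional matchings in 3-partite hypergraphs -/

section
variable {ι τ : Type*} [Fintype ι] [DecidableEq ι] [Fintype τ] [DecidableEq τ]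

/-- The fractional matching polytope of a 3-partite hypergraph. The edges are the elements of
`S : Finset ι`, and `f i e` is the vertex of the edge `e` on side `i`; the sides are kept disjoint
by treating the pair `(i, t)` as a vertex. Vectors are indexed by all of `ι` and vanish
off `S`. -/
def fracMatchings (f : Fin 3 → ι → τ) (S : Finset ι) : Set (ι → ℝ) :=
  {x | (∀ e, 0 ≤ x e) ∧ (∀ e, e ∉ S → x e = 0) ∧ ∀ i t, ∑ e with f i e = t, x e ≤ 1}

omit [DecidableEq ι] [Fintype τ] in
lemma isCompact_fracMatchings (f : Fin 3 → ι → τ) (S : Finset ι) :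
    IsCompact (fracMatchings f S) := by
  refine (isCompact_Icc (a := (0 : ι → ℝ)) (b := 1)).of_isClosed_subset ?_ ?_
  · have hset : fracMatchings f S = (⋂ e, {x | 0 ≤ x e}) ∩ ((⋂ e, ⋂ (_ : e ∉ S), {x | x e = 0}) ∩
        ⋂ i, ⋂ t, {x | ∑ e with f i e = t, x e ≤ 1}) := by
      ext x; simp [fracMatchings]
    rw [hset]
    refine (isClosed_iInter fun e => isClosed_le (by fun_prop) (by fun_prop)).inter
      ((isClosed_iInter fun e => isClosed_iInter fun _ =>
        isClosed_eq (by fun_prop) (by fun_prop)).inter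
      (isClosed_iInter fun i => isClosed_iInter fun t =>
        isClosed_le (by fun_prop) (by fun_prop)))
  · rintro x ⟨h0, -, h1⟩
    refine ⟨h0, fun e => (single_le_sum (fun e' _ => h0 e') ?_).trans (h1 0 (f 0 e))⟩
    simp

omit [DecidableEq ι] [Fintype τ] in
/-- The maximum of a linear profit over the polytope is attained at an extreme point. -/
lemma exists_extreme (f : Fin 3 → ι → τ) (S : Finset ι) (p x : ι → ℝ)
    (hx : x ∈ fracMatchings f S) :
    ∃ y ∈ (fracMatchings f S).extremePoints ℝ, ∑ e, p e * x e ≤ ∑ e, p e * y e := by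
  let l : (ι → ℝ) →L[ℝ] ℝ := ∑ e, p e • ContinuousLinearMap.proj e
  have hl (z : ι → ℝ) : l z = ∑ e, p e * z e := by simp [l]
  have hK := isCompact_fracMatchings f S
  have hexp : IsExposed ℝ (fracMatchings f S) (l.toExposed (fracMatchings f S)) :=
    ContinuousLinearMap.toExposed.isExposed
  obtain ⟨z, hz, hmax⟩ := hK.exists_isMaxOn ⟨x, hx⟩ l.continuous.continuousOn
  obtain ⟨y, hy⟩ := (hexp.isCompact hK).extremePoints_nonempty ⟨z, hz, fun y hy => hmax hy⟩
  refine ⟨y, hexp.isExtreme.extremePoints_subset_extremePoints hy, ?_⟩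
  rw [← hl, ← hl]
  exact hy.1.2 x hx

/-- At an extreme point `y` positive on `S`, no nonzero direction is annihilated by all tight
constraints: otherwise `y` would be the midpoint of two feasible points `y ± ε • d`. -/
lemma eq_zero_of_extreme (f : Fin 3 → ι → τ) (S : Finset ι) (y d : ι → ℝ)
    (hy : y ∈ (fracMatchings f S).extremePoints ℝ) (hpos : ∀ e ∈ S, 0 < y e)
    (hdS : ∀ e, e ∉ S → d e = 0)
    (hd : ∀ i t, ∑ e with f i e = t, y e = 1 → ∑ e with f i e = t, d e = 0) : d = 0 := by
  obtain ⟨⟨h0, hS, h1⟩, hext⟩ := hy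
  have key (d : ι → ℝ) (hdS : ∀ e, e ∉ S → d e = 0)
      (hd : ∀ i t, ∑ e with f i e = t, y e = 1 → ∑ e with f i e = t, d e = 0) :
      ∀ᶠ ε : ℝ in nhds 0, y + ε • d ∈ fracMatchings f S := by
    have hA : ∀ᶠ ε : ℝ in nhds 0, ∀ e, 0 ≤ y e + ε * d e := by
      refine Filter.eventually_all.2 fun e => ?_
      by_cases he : e ∈ S
      · have : Filter.Tendsto (fun ε : ℝ => y e + ε * d e) (nhds 0) (nhds (y e + 0 * d e)) :=
          (by fun_prop : Continuous fun ε : ℝ => y e + ε * d e).tendsto 0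
        refine (this.eventually (lt_mem_nhds (a := 0) ?_)).mono fun _ h => h.le
        simpa using hpos e he
      · simp [hdS e he, h0 e]
    have hB : ∀ᶠ ε : ℝ in nhds 0, ∀ i t,
        ∑ e with f i e = t, y e + ε * ∑ e with f i e = t, d e ≤ 1 := by
      refine Filter.eventually_all.2 fun i => Filter.eventually_all.2 fun t => ?_
      rcases (h1 i t).eq_or_lt with h | h
      · simp [hd i t h, h]
      · set a := ∑ e with f i e = t, y e
        set b := ∑ e with f i e = t, d e
        have : Filter.Tendsto (fun ε : ℝ => a + ε * b) (nhds 0) (nhds (a + 0 * b)) :=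
          (by fun_prop : Continuous fun ε : ℝ => a + ε * b).tendsto 0
        refine (this.eventually_lt_const (u := 1) ?_).mono fun _ h => h.le
        simpa using h
    filter_upwards [hA, hB] with ε hA hB
    refine ⟨hA, fun e he => by simp [hS e he, hdS e he], fun i t => ?_⟩
    simpa [sum_add_distrib, mul_sum] using hB i t
  have h2 := (key d hdS hd).and (key (-d) (fun e he => by simp [hdS e he])
    (fun i t h => by simp [hd i t h]))
  obtain ⟨ε, ⟨hp, hm⟩, hε⟩ :=
    ((h2.filter_mono nhdsWithin_le_nhds).and (self_mem_nhdsWithin (s := Set.Ioi (0:ℝ)))).exists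
  have hseg : y ∈ openSegment ℝ (y + ε • d) (y + ε • -d) :=
    ⟨1/2, 1/2, by norm_num, by norm_num, by norm_num, by
      ext e; simp; ring⟩
  have h3 := hext hp hm hseg
  have hε0 : ε ≠ 0 := (Set.mem_Ioi.1 hε).ne'
  ext e
  have h4 := congrFun h3 e
  simpa [hε0] using h4

/-- An extreme point positive on `S ≠ ∅` has an edge such that the edges meeting it, itself
included, have total weight at most `2`. -/
lemma exists_light_edge (f : Fin 3 → ι → τ) (S : Finset ι) (y : ι → ℝ)
    (hy : y ∈ (fracMatchings f S).extremePoints ℝ) (hpos : ∀ e ∈ S, 0 < y e)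
    (hSne : S.Nonempty) :
    ∃ e ∈ S, ∑ e' with ∃ i, f i e' = f i e, y e' ≤ 2 := by
  have hyP := hy.1
  obtain ⟨h0, hS, h1⟩ := hyP
  let T : Finset (Fin 3 × τ) := {v | ∑ e with f v.1 e = v.2, y e = 1}
  by_cases hdeg : ∃ v ∈ T, #{e ∈ S | f v.1 e = v.2} ≤ 2
  · obtain ⟨⟨i, t⟩, hv, hcard⟩ := hdeg
    have hv1 : ∑ e with f i e = t, y e = 1 := by simpa [T] using hv
    have hv2 : ∑ e ∈ S with f i e = t, y e = 1 := by
      rw [← hv1]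
      refine sum_subset (filter_subset_filter _ (subset_univ _)) fun e he hne => hS e ?_
      simp_all
    obtain ⟨e, he, hhalf⟩ : ∃ e ∈ S, 1 / 2 ≤ y e := by
      by_contra! hlt
      have hle : ∑ e ∈ S with f i e = t, y e ≤ #{e ∈ S | f i e = t} • (1/2 : ℝ) :=
        sum_le_card_nsmul _ _ _ fun e he => (hlt e (mem_filter.1 he).1).le
      have hne : ({e ∈ S | f i e = t} : Finset ι).Nonempty := by
        by_contra h
        rw [not_nonempty_iff_eq_empty] at h
        simp [h] at hv2
      have hlt' : ∑ e ∈ S with f i e = t, y e < ∑ e ∈ S with f i e = t, (1/2 : ℝ) :=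
        sum_lt_sum_of_nonempty hne fun e he => hlt e (mem_filter.1 he).1
      rw [hv2, sum_const, nsmul_eq_mul] at hlt'
      have : (#{e ∈ S | f i e = t} : ℝ) ≤ 2 := by exact_mod_cast hcard
      linarith
    refine ⟨e, he, ?_⟩
    -- the edge `e` itself is counted at each of its three vertices
    have hpt (e' : ι) : (if ∃ i, f i e' = f i e then y e' else 0) + (if e' = e then 2 * y e else 0)
        ≤ ∑ i, if f i e' = f i e then y e' else 0 := by
      by_cases hee : e' = e
      · subst hee; simp; linarith
      · rw [if_neg hee, add_zero]
        split_ifs with h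
        · obtain ⟨i, hi⟩ := h
          have := single_le_sum (f := fun i => if f i e' = f i e then y e' else 0)
            (fun i _ => by split_ifs <;> simp [h0]) (mem_univ i)
          simpa [hi] using this
        · exact sum_nonneg fun i _ => by split_ifs <;> simp [h0]
    have hsum := sum_le_sum fun e' (_ : e' ∈ univ) => hpt e'
    rw [sum_add_distrib, sum_comm, ← sum_filter, sum_ite_eq' univ e] at hsum
    have h3 : ∑ i, ∑ e', (if f i e' = f i e then y e' else 0) ≤ ∑ _i : Fin 3, (1 : ℝ) :=
      sum_le_sum fun i _ => by rw [← sum_filter]; exact h1 i _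
    simp only [mem_univ, if_true] at hsum
    simp at h3
    linarith
  · push Not at hdeg
    exfalso
    -- `L` sends a vector on the edges to its degrees at the tight vertices
    let L : (S → ℝ) →ₗ[ℝ] (T → ℝ) :=
      Matrix.mulVecLin (Matrix.of fun v e => if f v.1.1 e.1 = v.1.2 then (1 : ℝ) else 0)
    have hL (d : S → ℝ) (v : T) : L d v = ∑ e : S, if f v.1.1 e.1 = v.1.2 then d e else 0 := by
      simp [L, Matrix.mulVec, dotProduct]
    have hinj : Function.Injective L := by
      rw [← LinearMap.ker_eq_bot, LinearMap.ker_eq_bot']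
      intro d hd
      let d' : ι → ℝ := fun e => if h : e ∈ S then d ⟨e, h⟩ else 0
      have hd' : d' = 0 := by
        refine eq_zero_of_extreme f S y d' hy hpos (fun e he => by simp [d', he]) fun i t hit => ?_
        have h := congrFun hd ⟨(i, t), by simpa [T] using hit⟩
        rw [hL] at h
        rw [sum_filter, ← sum_subset (subset_univ S) (fun e _ he => by simp [d', he]),
          ← sum_coe_sort S]
        simpa [d'] using h
      ext e
      have := congrFun hd' e.1
      simpa [d'] using this
    have hST : #S ≤ #T := by
      simpa using LinearMap.finrank_le_finrank_of_injective hinj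
    have hdc : ∑ v ∈ T, #{e ∈ S | f v.1 e = v.2} = ∑ e ∈ S, #{v ∈ T | f v.1 e = v.2} :=
      sum_card_bipartiteAbove_eq_sum_card_bipartiteBelow fun (v : Fin 3 × τ) e => f v.1 e = v.2
    have hsub (e : ι) : ({v ∈ T | f v.1 e = v.2} : Finset _) ⊆ univ.image fun i => (i, f i e) := by
      rintro ⟨i, t⟩ hv
      simp only [mem_filter] at hv
      simp [hv.2]
    have himg (e : ι) : #(univ.image fun i : Fin 3 => (i, f i e)) = 3 := by
      rw [card_image_of_injective _ fun i j h => (Prod.mk.inj h).1]; simp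
    have hle3 (e : ι) : #{v ∈ T | f v.1 e = v.2} ≤ 3 := (card_le_card (hsub e)).trans_eq (himg e)
    have hge : #T * 3 ≤ ∑ v ∈ T, #{e ∈ S | f v.1 e = v.2} := by
      exact card_nsmul_le_sum T _ 3 fun v hv => hdeg v hv
    have hle : ∑ e ∈ S, #{v ∈ T | f v.1 e = v.2} ≤ ∑ e ∈ S, 3 := sum_le_sum fun e _ => hle3 e
    have hconst : ∑ e ∈ S, 3 = #S * 3 := by simp
    have hcardeq : #S = #T := by omega
    have hall : ∀ e ∈ S, #{v ∈ T | f v.1 e = v.2} = 3 :=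
      (sum_eq_sum_iff_of_le fun e _ => hle3 e).1 (by omega)
    have hT : ∀ e ∈ S, ∀ i, (i, f i e) ∈ T := by
      intro e he i
      have heq := eq_of_subset_of_card_le (hsub e) (by rw [himg, hall e he])
      have : (i, f i e) ∈ univ.image fun i => (i, f i e) := mem_image_of_mem _ (mem_univ i)
      rw [← heq] at this
      exact (mem_filter.1 this).1
    have hsurj : Function.Surjective L :=
      (LinearMap.injective_iff_surjective_of_finrank_eq_finrank (by simpa using hcardeq)).1 hinj
    -- summing the constraints of any one side counts every edge exactly once
    have hside (d : S → ℝ) (i : Fin 3) : (∑ v : T, if v.1.1 = i then L d v else 0) = ∑ e, d e := by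
      have hrow (v : T) : (if v.1.1 = i then L d v else 0) =
          ∑ e : S, if v = ⟨(i, f i e.1), hT e.1 e.2 i⟩ then d e else 0 := by
        obtain ⟨⟨i', t⟩, hv⟩ := v
        by_cases hi : i' = i
        · subst hi; simp [hL, eq_comm]
        · simp [hi]
      simp_rw [hrow]
      rw [sum_comm]
      simp
    obtain ⟨e₀, he₀⟩ := hSne
    obtain ⟨d, hd⟩ := hsurj (Pi.single ⟨(0, f 0 e₀), hT e₀ he₀ 0⟩ 1)
    have hA := hside d 0
    have hB := hside d 1
    rw [hd] at hA hB
    rw [← hB] at hA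
    -- the unit vector at a vertex of side 0 has sum 1 over side 0 but sum 0 over side 1
    have hzero : ∀ v : T, (if v.1.1 = 1 then
        (Pi.single ⟨(0, f 0 e₀), hT e₀ he₀ 0⟩ 1 : T → ℝ) v else 0) = 0 := by
      intro v
      split_ifs with h
      · refine Pi.single_eq_of_ne (fun hv => ?_) _
        simp [hv] at h
      · rfl
    rw [sum_congr rfl fun v _ => hzero v, sum_const_zero,
      sum_eq_single ⟨(0, f 0 e₀), hT e₀ he₀ 0⟩ (fun v _ hv => by simp [hv]) (by simp)] at hA
    simp at hA

/-- The fractional matching LP of a 3-partite hypergraph has integrality gap at most `2`. The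
profits `p` may be negative, as the recursion produces such profits. -/
theorem exists_matching (f : Fin 3 → ι → τ) (S : Finset ι) :
    ∀ p x : ι → ℝ, x ∈ fracMatchings f S →
      ∃ M ⊆ S, (∀ i, Set.InjOn (f i) M) ∧ ∑ e, p e * x e ≤ 2 * ∑ e ∈ M, p e := by
  induction S using Finset.strongInduction with
  | H S ih =>
  intro p x hx
  rcases S.eq_empty_or_nonempty with rfl | hne
  · refine ⟨∅, subset_rfl, by simp, ?_⟩
    simp [hx.2.1 _ (notMem_empty _)]
  obtain ⟨y, hy, hxy⟩ := exists_extreme f S p x hx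
  obtain ⟨h0, hS, h1⟩ := hy.1
  have hzero (e : ι) : Function.update y e 0 ∈ fracMatchings f (S.erase e) := by
    have hle (e' : ι) : Function.update y e 0 e' ≤ y e' := by
      by_cases h : e' = e
      · subst h; simp [h0]
      · simp [h]
    refine ⟨fun e' => ?_, fun e' he' => ?_, fun i t =>
      (sum_le_sum fun e' _ => hle e').trans (h1 i t)⟩
    · by_cases h : e' = e
      · subst h; simp
      · simp [h, h0]
    · by_cases h : e' = e
      · subst h; simp
      · simpa [h] using hS e' (by simpa [h] using he')
  have hupd (q : ι → ℝ) (e : ι) :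
      ∑ e', q e' * Function.update y e 0 e' = ∑ e', q e' * y e' - q e * y e := by
    rw [← add_sum_erase univ (fun e' => q e' * y e') (mem_univ e),
      ← add_sum_erase univ (fun e' => q e' * Function.update y e 0 e') (mem_univ e)]
    rw [sum_congr rfl fun e' he' => by rw [Function.update_of_ne (ne_of_mem_erase he')]]
    simp
  by_cases hdrop : ∃ e ∈ S, p e * y e ≤ 0
  · obtain ⟨e, he, hpe⟩ := hdrop
    obtain ⟨M, hM, hinj, hval⟩ := ih _ (erase_ssubset he) p _ (hzero e)
    refine ⟨M, hM.trans (erase_subset _ _), hinj, ?_⟩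
    rw [hupd] at hval
    linarith
  push Not at hdrop
  have hpos : ∀ e ∈ S, 0 < y e := fun e he =>
    (h0 e).lt_of_ne fun h => by simpa [← h] using hdrop e he
  obtain ⟨e, he, hlight⟩ := exists_light_edge f S y hy hpos hne
  have hpe : 0 < p e := pos_of_mul_pos_left (hdrop e he) (h0 e)
  -- the residual profit of the local ratio step; it vanishes at `e`
  let q : ι → ℝ := fun e' => p e' - if ∃ i, f i e' = f i e then p e else 0
  have hqe : q e = 0 := by simp [q]
  obtain ⟨M, hM, hinj, hval⟩ := ih _ (erase_ssubset he) q _ (hzero e)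
  rw [hupd, hqe, zero_mul, sub_zero] at hval
  have hqy : ∑ e', q e' * y e' = ∑ e', p e' * y e' -
      p e * ∑ e' with ∃ i, f i e' = f i e, y e' := by
    simp only [q, sub_mul, sum_sub_distrib, ite_mul, zero_mul, mul_sum, sum_filter,
      mul_ite, mul_zero]
  have hqM : ∑ e' ∈ M, q e' = ∑ e' ∈ M, p e' - #{e' ∈ M | ∃ i, f i e' = f i e} * p e := by
    simp only [q, sum_sub_distrib, ← sum_filter, sum_const, nsmul_eq_mul]
  have hmul := mul_le_mul_of_nonneg_left hlight hpe.le
  have heM : e ∉ M := fun h => by simpa using hM h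
  by_cases hblock : ∃ e' ∈ M, ∃ i, f i e' = f i e
  · refine ⟨M, hM.trans (erase_subset _ _), hinj, ?_⟩
    have hone : (1 : ℝ) ≤ #{e' ∈ M | ∃ i, f i e' = f i e} := by
      obtain ⟨e', he', h⟩ := hblock
      exact_mod_cast card_pos.2 ⟨e', mem_filter.2 ⟨he', h⟩⟩
    have := mul_le_mul_of_nonneg_right hone hpe.le
    linarith
  · push Not at hblock
    refine ⟨insert e M, insert_subset he (hM.trans (erase_subset _ _)), fun i => ?_, ?_⟩
    · rw [coe_insert, Set.injOn_insert (by simpa using heM)]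
      refine ⟨hinj i, ?_⟩
      rintro ⟨e', he', h⟩
      exact hblock e' he' i h
    · rw [sum_insert heM]
      have hz : #{e' ∈ M | ∃ i, f i e' = f i e} = 0 := by
        simpa [filter_eq_empty_iff] using hblock
      rw [hz] at hqM
      simp at hqM
      linarith
end

/-! ### Reduction of bounded color matching -/

/-- Bi-criteria `((1/2, 0), (0, 1))` rounding for weighted bipartite Bounded Color
Matching: for any fractional solution `x` of the LP, there is a matching of profit at
least half the LP profit using at most `w_j + 1` edges of each color `j`. -/
theorem weighted_bipartite_half_approx {V : Type*} [Fintype V] [DecidableEq V]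
    (G : SimpleGraph V) [DecidableRel G.Adj] (hbip : IsBipartiteGraph G)
    (k : ℕ) (c : Sym2 V → Fin k) (w : Fin k → ℕ) (hw : ∀ j, 1 ≤ w j)
    (p : Sym2 V → ℚ) (hp : ∀ e, 0 ≤ p e)
    (x : Sym2 V → ℝ) (hx : ∀ e ∈ G.edgeFinset, 0 ≤ x e ∧ x e ≤ 1)
    (hdeg : ∀ v : V, ∑ e ∈ G.edgeFinset.filter (fun e => v ∈ e), x e ≤ 1)
    (hcol : ∀ j : Fin k, ∑ e ∈ G.edgeFinset.filter (fun e => c e = j), x e ≤ (w j : ℝ)) :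
    ∃ M ⊆ G.edgeFinset, IsMatchingSet M ∧
      (1 / 2 : ℝ) * ∑ e ∈ G.edgeFinset, (p e : ℝ) * x e ≤ ∑ e ∈ M, (p e : ℝ) ∧
      ∀ j : Fin k, (M.filter (fun e => c e = j)).card ≤ w j + 1 := by
  obtain ⟨A, hA⟩ := hbip
  have hends (e : {e // e ∈ G.edgeFinset}) : ∃ a b : V, e.1 = s(a, b) ∧ a ∈ A ∧ b ∉ A := by
    obtain ⟨e, he⟩ := e
    induction e using Sym2.ind with
    | _ u v =>
      have huv : G.Adj u v := by simpa using he
      by_cases hu : u ∈ A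
      · exact ⟨u, v, rfl, hu, (hA huv).1 hu⟩
      · exact ⟨v, u, Sym2.eq_swap, not_not.1 fun hv => hu ((hA huv).2 hv), hu⟩
  choose a b hab haA hbA using hends
  let ι := Σ e : {e // e ∈ G.edgeFinset}, Fin (w (c e.1))
  -- edges of the hypergraph are pairs of a graph edge and a slot of its color
  let f : Fin 3 → ι → V ⊕ Σ j : Fin k, Fin (w j) :=
    ![fun e => .inl (a e.1), fun e => .inl (b e.1), fun e => .inr ⟨c e.1.1, e.2⟩]
  let y : ι → ℝ := fun e => x e.1.1 / w (c e.1.1)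
  have hw0 (j : Fin k) : (0 : ℝ) < w j := by exact_mod_cast hw j
  have hy0 (e : ι) : 0 ≤ y e := div_nonneg (hx _ e.1.2).1 (hw0 _).le
  -- the copies of one edge together carry its fractional value
  have hcopies (g : {e // e ∈ G.edgeFinset} → ℝ) :
      ∑ e : ι, g e.1 * y e = ∑ e, g e * x e.1 := by
    rw [Fintype.sum_sigma]
    refine sum_congr rfl fun e _ => ?_
    have := (hw0 (c e.1)).ne'
    simp [y]
    field_simp
  have hvert (g : {e // e ∈ G.edgeFinset} → V) (hg : ∀ e, g e ∈ e.1) (v : V) :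
      ∑ e : ι with g e.1 = v, y e ≤ 1 := by
    calc ∑ e : ι with g e.1 = v, y e
        = ∑ e : {e // e ∈ G.edgeFinset}, (if g e = v then 1 else 0) * x e.1 := by
          rw [← hcopies, sum_filter]
          simp
      _ ≤ ∑ e ∈ G.edgeFinset with v ∈ e, x e := ?_
      _ ≤ 1 := hdeg v
    · rw [sum_filter, ← sum_coe_sort G.edgeFinset]
      refine sum_le_sum fun e _ => ?_
      have := (hx _ e.2).1
      by_cases h : g e = v
      · rw [if_pos h, if_pos (h ▸ hg e), one_mul]
      · simp only [h, if_false, zero_mul]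
        split_ifs <;> simp [this]
  have hslot (s : Σ j : Fin k, Fin (w j)) :
      ∑ e : ι with (⟨c e.1.1, e.2⟩ : Σ j : Fin k, Fin (w j)) = s, y e ≤ 1 := by
    obtain ⟨j, s⟩ := s
    have h1 : ∑ e : ι with (⟨c e.1.1, e.2⟩ : Σ j : Fin k, Fin (w j)) = ⟨j, s⟩, y e =
        ∑ e : {e // e ∈ G.edgeFinset}, if c e.1 = j then x e.1 / w j else 0 := by
      rw [sum_filter, Fintype.sum_sigma]
      refine sum_congr rfl fun e _ => ?_
      by_cases h : c e.1 = j
      · subst h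
        simp [y]
      · simp [h]
    have h2 := hcol j
    rw [sum_filter, ← sum_coe_sort G.edgeFinset] at h2
    rw [h1, ← div_self (hw0 j).ne']
    refine le_trans (le_of_eq ?_) (div_le_div_of_nonneg_right h2 (hw0 j).le)
    rw [sum_div]
    exact sum_congr rfl fun e _ => by split_ifs <;> simp
  have hyP : y ∈ fracMatchings f univ := by
    refine ⟨hy0, by simp, fun i t => ?_⟩
    fin_cases i <;> rcases t with v | s <;> simp only [f]
    · simpa using hvert a (fun e => by rw [hab e]; simp) v
    · simp
    · simpa using hvert b (fun e => by rw [hab e]; simp) v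
    · simp
    · simp
    · simpa using hslot s
  obtain ⟨N, -, hinj, hval⟩ := exists_matching f univ (fun e => (p e.1.1 : ℝ)) y hyP
  have ha (e : ι) (he : e ∈ N) (e' : ι) (he' : e' ∈ N) (h : a e.1 = a e'.1) : e = e' :=
    hinj 0 he he' (by simp [f, h])
  have hb (e : ι) (he : e ∈ N) (e' : ι) (he' : e' ∈ N) (h : b e.1 = b e'.1) : e = e' :=
    hinj 1 he he' (by simp [f, h])
  refine ⟨N.image fun e => e.1.1, fun e he => ?_, ?_, ?_, fun j => ?_⟩
  · obtain ⟨e', -, rfl⟩ := mem_image.1 he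
    exact e'.1.2
  · intro e he e' he' hne v hv hv'
    obtain ⟨e, heN, rfl⟩ := mem_image.1 he
    obtain ⟨e', heN', rfl⟩ := mem_image.1 he'
    rw [hab, Sym2.mem_iff] at hv' hv
    -- `v` lies in `A` or outside it, so it is the endpoint of the same side in both edges
    rcases hv with rfl | rfl <;> rcases hv' with h | h
    · exact hne (by rw [ha e heN e' heN' h])
    · exact hbA e'.1 (h ▸ haA e.1)
    · exact hbA e.1 (h ▸ haA e'.1)
    · exact hne (by rw [hb e heN e' heN' h])
  · rw [sum_image fun e he e' he' h => ha e he e' he' (by rw [Subtype.ext h])]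
    rw [hcopies fun e => (p e.1 : ℝ)] at hval
    rw [← sum_coe_sort G.edgeFinset]
    linarith
  · rw [filter_image]
    refine card_image_le.trans (le_trans ?_ (Nat.le_succ _))
    have hmaps : Set.MapsTo (f 2) ({e ∈ N | c e.1.1 = j} : Finset ι)
        (univ.image fun s : Fin (w j) => (.inr ⟨j, s⟩ : V ⊕ Σ j : Fin k, Fin (w j))) := by
      rintro ⟨e, s⟩ he
      obtain ⟨-, rfl⟩ := mem_filter.1 he
      simp [f]
    refine (card_le_card_of_injOn _ hmaps ((hinj 2).mono (by exact_mod_cast filter_subset _ N))).trans ?_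
    exact card_image_le.trans (by simp)
end

section
/- Let G = (V, E) be a finite simple undirected graph with edge colors and integer color bounds w_j ≥ 1, and let λ ∈ [0, 1]. Let x : E → [0, 1] satisfy Σ_{e∈δ(v)} x_e ≤ 1 for all v ∈ V, Σ_{e∈E(S)} x_e ≤ (|S| − 1)/2 for every odd-cardinality subset S ⊆ V, and Σ_{e∈E_j} x_e ≤ w_j for all colors j. Then there exists a matching M ⊆ E such that |M| ≥ (2/(3 + λ)) · Σ_{e∈E} x_e and |M ∩ E_j| ≤ 2w_j/(λ + 1) + 1 for every color j. -/
open Finset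

/-! ### Greedy matchings inside a colour class -/

/-- Two edges touch when they share a vertex; in particular every edge touches itself. -/
def Touch {V : Type*} (e f : Sym2 V) : Prop := ∃ v, v ∈ e ∧ v ∈ f

lemma touch_self {V : Type*} (e : Sym2 V) : Touch e e := by
  induction e with
  | _ a b => exact ⟨a, by simp, by simp⟩

/-- Greedy choice of a matching `N` of average weight at least `1/2`. The number `κ` is the credit
`∑ (2 y e - 1)` collected from edges picked earlier. At each step an edge of weight at least `1/2`
is picked, if there is one: then all other edges touching it have weight at most `1/2`, so deleting
them does not lower the remaining sum of `2 y e - 1`. -/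
lemma exists_color_matching {V : Type*} [DecidableEq V] (y : Sym2 V → ℝ) :
    ∀ (C : Finset (Sym2 V)) (κ : ℝ) (U : ℕ), 0 ≤ κ → 0 ≤ κ + ∑ e ∈ C, (2 * y e - 1) →
      (∀ e ∈ C, ∀ f ∈ C, e ≠ f → Touch e f → y e + y f ≤ 1) →
      ∃ N ⊆ C, IsMatchingSet N ∧ N.card ≤ U ∧ 0 ≤ κ + ∑ e ∈ N, (2 * y e - 1) ∧
        (N.card = U ∨ ∀ f ∈ C, ∃ e ∈ N, Touch e f) := by
  classical
  intro C
  induction C using Finset.strongInduction with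
  | H C ih =>
  intro κ U hκ hsum htouch
  rcases Nat.eq_zero_or_pos U with rfl | hU
  · exact ⟨∅, by simp, by simp [IsMatchingSet], by simp, by simpa using hκ, by simp⟩
  rcases C.eq_empty_or_nonempty with rfl | hne
  · exact ⟨∅, by simp, by simp [IsMatchingSet], by simp, by simpa using hκ, by simp⟩
  obtain ⟨e, heC, hother, hek⟩ : ∃ e ∈ C, (∀ f ∈ C, e ≠ f → Touch e f → 2 * y f - 1 ≤ 0) ∧
      0 ≤ κ + (2 * y e - 1) := by
    by_cases h : ∃ e ∈ C, 1 / 2 ≤ y e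
    · obtain ⟨e, he, hy⟩ := h
      refine ⟨e, he, fun f hf hne ht => ?_, by linarith⟩
      have := htouch e he f hf hne ht
      linarith
    · push Not at h
      obtain ⟨e, he⟩ := hne
      refine ⟨e, he, fun f hf _ _ => by linarith [h f hf], ?_⟩
      rw [← Finset.add_sum_erase C _ he] at hsum
      have : ∑ f ∈ C.erase e, (2 * y f - 1) ≤ 0 :=
        Finset.sum_nonpos fun f hf => by linarith [h f (Finset.mem_of_mem_erase hf)]
      linarith
  have hsplit := Finset.sum_filter_add_sum_filter_not C (fun f => Touch e f)
    (fun f => 2 * y f - 1)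
  have heT : e ∈ C.filter (fun f => Touch e f) := by simp [heC, touch_self]
  have hT : ∑ f ∈ C.filter (fun f => Touch e f), (2 * y f - 1) ≤ 2 * y e - 1 := by
    rw [← Finset.add_sum_erase _ _ heT]
    have : ∑ f ∈ (C.filter (fun f => Touch e f)).erase e, (2 * y f - 1) ≤ 0 := by
      refine Finset.sum_nonpos fun f hf => ?_
      simp only [Finset.mem_erase, Finset.mem_filter] at hf
      exact hother f hf.2.1 hf.1.symm hf.2.2
    linarith
  obtain ⟨N, hNC, hNm, hNU, hNs, hN⟩ := ih (C.filter (fun f => ¬ Touch e f))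
    (by
      refine (Finset.ssubset_iff_of_subset (Finset.filter_subset _ _)).2 ⟨e, heC, ?_⟩
      simp [touch_self])
    (κ + (2 * y e - 1)) (U - 1) hek (by linarith)
    (fun a ha b hb => htouch a (Finset.mem_of_mem_filter a ha) b (Finset.mem_of_mem_filter b hb))
  have hnt : ∀ f ∈ N, ¬ Touch e f := fun f hf => (Finset.mem_filter.1 (hNC hf)).2
  have heN : e ∉ N := fun h => hnt e h (touch_self e)
  refine ⟨insert e N, ?_, ?_, ?_, ?_, ?_⟩
  · exact Finset.insert_subset heC (hNC.trans (Finset.filter_subset _ _))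
  · intro a ha b hb hab v hva hvb
    rcases Finset.mem_insert.1 ha with hae | haN
    · rcases Finset.mem_insert.1 hb with hbe | hbN
      · exact hab (hae.trans hbe.symm)
      · exact hnt b hbN ⟨v, hae ▸ hva, hvb⟩
    · rcases Finset.mem_insert.1 hb with hbe | hbN
      · exact hnt a haN ⟨v, hbe ▸ hvb, hva⟩
      · exact hNm a haN b hbN hab v hva hvb
  · rw [Finset.card_insert_of_notMem heN]; omega
  · rw [Finset.sum_insert heN]; linarith
  · rcases hN with hN | hN
    · left; rw [Finset.card_insert_of_notMem heN]; omega
    · right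
      intro f hf
      by_cases h : Touch e f
      · exact ⟨e, Finset.mem_insert_self _ _, h⟩
      · obtain ⟨g, hg, hgf⟩ := hN f (Finset.mem_filter.2 ⟨hf, h⟩)
        exact ⟨g, Finset.mem_insert_of_mem hg, hgf⟩

lemma card_filter_mem {V : Type*} [Fintype V] [DecidableEq V] {e : Sym2 V} (he : ¬ e.IsDiag) :
    (univ.filter (fun v => v ∈ e)).card = 2 := by
  rw [← Sym2.card_toFinset_of_not_isDiag e he]
  congr 1
  ext v
  simp [Sym2.mem_toFinset]

lemma sum_degree_eq {V : Type*} [DecidableEq V] (W : Finset V)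
    (E : Finset (Sym2 V)) (y : Sym2 V → ℝ) :
    ∑ v ∈ W, ∑ e ∈ E.filter (fun e => v ∈ e), y e =
      ∑ e ∈ E, ((W.filter (fun v => v ∈ e)).card : ℝ) * y e := by
  simp_rw [Finset.sum_filter]
  rw [Finset.sum_comm]
  refine Finset.sum_congr rfl fun e _ => ?_
  rw [← Finset.sum_filter, Finset.sum_const, nsmul_eq_mul]

/-- The vertices of `N` number at most `2 |N|`, and each sees weight at most `1`. In the sum of
these degrees every edge touching `N` is counted, and the edges of `N` itself twice, which gives
the term `- y(N)`. -/
lemma touched_weight_le {V : Type*} [Fintype V] [DecidableEq V]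
    (E : Finset (Sym2 V)) (hE : ∀ e ∈ E, ¬ e.IsDiag) (y : Sym2 V → ℝ) (hy : ∀ e ∈ E, 0 ≤ y e)
    (hdeg : ∀ v : V, ∑ e ∈ E.filter (fun e => v ∈ e), y e ≤ 1)
    (N : Finset (Sym2 V)) (hN : N ⊆ E) [DecidablePred fun f => ∃ e ∈ N, Touch e f] :
    ∑ f ∈ E.filter (fun f => ∃ e ∈ N, Touch e f), y f ≤ 2 * N.card - ∑ e ∈ N, y e := by
  classical
  set W : Finset V := N.biUnion (fun e => univ.filter (fun v => v ∈ e)) with hW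
  have hWmem : ∀ e ∈ N, ∀ v, v ∈ e → v ∈ W := fun e he v hv => by
    rw [hW, Finset.mem_biUnion]; exact ⟨e, he, by simpa using hv⟩
  have hWc : (W.card : ℝ) ≤ 2 * N.card := by
    have : W.card ≤ N.card * 2 := by
      refine Finset.card_biUnion_le_card_mul _ _ _ fun e he => ?_
      rw [card_filter_mem (hE e (hN he))]
    have h2 : (W.card : ℝ) ≤ ((N.card * 2 : ℕ) : ℝ) := by exact_mod_cast this
    push_cast at h2; linarith
  have h1 : ∑ v ∈ W, ∑ e ∈ E.filter (fun e => v ∈ e), y e ≤ W.card := by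
    calc _ ≤ ∑ v ∈ W, (1 : ℝ) := Finset.sum_le_sum fun v _ => hdeg v
      _ = _ := by simp
  rw [sum_degree_eq] at h1
  have h2 : ∑ f ∈ E.filter (fun f => ∃ e ∈ N, Touch e f), y f + ∑ e ∈ N, y e ≤
      ∑ e ∈ E, ((W.filter (fun v => v ∈ e)).card : ℝ) * y e := by
    have hNE : ∑ e ∈ N, y e = ∑ e ∈ E, if e ∈ N then y e else 0 := by
      rw [← Finset.sum_filter, Finset.filter_mem_eq_inter, Finset.inter_eq_right.2 hN]
    rw [hNE, Finset.sum_filter, ← Finset.sum_add_distrib]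
    refine Finset.sum_le_sum fun f hf => ?_
    have hyf := hy f hf
    by_cases hfN : f ∈ N
    · have hc : (W.filter (fun v => v ∈ f)) = univ.filter (fun v => v ∈ f) := by
        ext v
        simp only [Finset.mem_filter, Finset.mem_univ, true_and]
        exact ⟨fun h => h.2, fun h => ⟨hWmem f hfN v h, h⟩⟩
      rw [hc, card_filter_mem (hE f hf), if_pos ⟨f, hfN, touch_self f⟩, if_pos hfN]
      push_cast; linarith
    · rw [if_neg hfN, add_zero]
      split_ifs with ht
      · obtain ⟨e, he, v, hve, hvf⟩ := ht
        have : 1 ≤ (W.filter (fun v => v ∈ f)).card :=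
          Finset.card_pos.2 ⟨v, Finset.mem_filter.2 ⟨hWmem e he v hve, hvf⟩⟩
        have : (1 : ℝ) ≤ ((W.filter (fun v => v ∈ f)).card : ℝ) := by exact_mod_cast this
        nlinarith
      · positivity
  linarith

/-! ### Directions of movement -/

/-- Moving along a ray until the first of finitely many constraints becomes tight: `b i` is the
slack of constraint `i` at the start, and `c i` the rate at which this slack decreases. -/
lemma exists_first_hit {ι : Type*} (s : Finset ι) (b c : ι → ℝ) (hb : ∀ i ∈ s, 0 ≤ b i)
    (hbc : ∀ i ∈ s, b i = 0 → c i = 0) (hc : ∃ i ∈ s, 0 < c i) :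
    ∃ t : ℝ, 0 ≤ t ∧ (∀ i ∈ s, 0 ≤ b i - t * c i) ∧ ∃ i ∈ s, 0 < b i ∧ b i - t * c i = 0 := by
  classical
  obtain ⟨i₀, hi₀, hmin⟩ := Finset.exists_min_image (s.filter (fun i => 0 < c i))
    (fun i => b i / c i) (by obtain ⟨i, hi, h⟩ := hc; exact ⟨i, by simp [hi, h]⟩)
  obtain ⟨hs₀, hc₀⟩ := Finset.mem_filter.1 hi₀
  have hb₀ : 0 < b i₀ := lt_of_le_of_ne (hb _ hs₀) fun h => hc₀.ne' (hbc _ hs₀ h.symm)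
  refine ⟨b i₀ / c i₀, by positivity, fun i hi => ?_, i₀, hs₀, hb₀, ?_⟩
  · by_cases hci : 0 < c i
    · have := hmin i (by simp [hi, hci])
      rw [le_div_iff₀ hci] at this
      linarith
    · have : 0 ≤ b i₀ / c i₀ := by positivity
      nlinarith [hb i hi]
  · field_simp
    ring

/-- If all weights are positive and every colour class has average weight below `1/2`, then some
nonzero direction `z` keeps all tight constraints tight. If there were none, the linear map `L`
sending `z` to its sums over the tight vertices and tight colours would be injective. Counting then
makes it a bijection, with every edge joining two tight vertices and having a tight colour, so the
vertex values of `L z` add up to twice its colour values. This contradicts surjectivity. -/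
lemma exists_kernel {V : Type*} [Fintype V] [DecidableEq V] {k : ℕ}
    (c : Sym2 V → Fin k) (w : Fin k → ℕ) (hw : ∀ j, 1 ≤ w j)
    (E : Finset (Sym2 V)) (hne : E.Nonempty) (hE : ∀ e ∈ E, ¬ e.IsDiag)
    (y : Sym2 V → ℝ) (hy : ∀ e ∈ E, 0 < y e)
    (hlow : ∀ j, (E.filter (fun e => c e = j)).Nonempty →
      2 * ∑ e ∈ E.filter (fun e => c e = j), y e < ((E.filter (fun e => c e = j)).card : ℝ)) :
    ∃ z : Sym2 V → ℝ, (∃ e ∈ E, z e ≠ 0) ∧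
      (∀ v : V, ∑ e ∈ E.filter (fun e => v ∈ e), y e = 1 →
        ∑ e ∈ E.filter (fun e => v ∈ e), z e = 0) ∧
      (∀ j, ∑ e ∈ E.filter (fun e => c e = j), y e = w j →
        ∑ e ∈ E.filter (fun e => c e = j), z e = 0) := by
  classical
  set TV : Finset V := univ.filter (fun v => ∑ e ∈ E.filter (fun e => v ∈ e), y e = 1) with hTV
  set TC : Finset (Fin k) := univ.filter
    (fun j => ∑ e ∈ E.filter (fun e => c e = j), y e = w j) with hTC
  set ext : (E → ℝ) → Sym2 V → ℝ := fun z e => if h : e ∈ E then z ⟨e, h⟩ else 0 with hext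
  let L : (E → ℝ) →ₗ[ℝ] (TV ⊕ TC → ℝ) :=
    { toFun := fun z => Sum.elim (fun v => ∑ e ∈ E.filter (fun e => (v : V) ∈ e), ext z e)
        (fun j => ∑ e ∈ E.filter (fun e => c e = (j : Fin k)), ext z e)
      map_add' := by
        intro a b
        have : ∀ e, ext (a + b) e = ext a e + ext b e := by
          intro e; simp only [hext]; split_ifs <;> simp
        funext i
        rcases i with i | i <;> simp [this, Finset.sum_add_distrib]
      map_smul' := by
        intro r a
        have : ∀ e, ext (r • a) e = r * ext a e := by
          intro e; simp only [hext]; split_ifs <;> simp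
        funext i
        rcases i with i | i <;> simp [this, Finset.mul_sum] }
  suffices hinj : ¬ Function.Injective L by
    have : ∃ z, L z = 0 ∧ z ≠ 0 := by
      by_contra! h
      exact hinj ((injective_iff_map_eq_zero L).2 h)
    obtain ⟨z, hz, hz0⟩ := this
    refine ⟨ext z, ?_, fun v hv => ?_, fun j hj => ?_⟩
    · obtain ⟨e, he⟩ := Function.ne_iff.1 hz0
      exact ⟨e, e.2, by simpa [hext] using he⟩
    · exact congrFun hz (Sum.inl ⟨v, by simp [hTV, hv]⟩)
    · exact congrFun hz (Sum.inr ⟨j, by simp [hTC, hj]⟩)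
  intro hinj
  -- injectivity bounds the number of edges by the number of tight constraints
  have hfin : E.card ≤ TV.card + TC.card := by
    have := LinearMap.finrank_le_finrank_of_injective hinj
    simpa using this
  have hsum : ∀ x : Sym2 V → ℝ,
      ∑ j, ∑ e ∈ E.filter (fun e => c e = j), x e = ∑ e ∈ E, x e := fun x =>
    Finset.sum_fiberwise _ _ _
  have hdsum : ∑ v, ∑ e ∈ E.filter (fun e => v ∈ e), y e = 2 * ∑ e ∈ E, y e := by
    rw [sum_degree_eq, Finset.mul_sum]
    exact Finset.sum_congr rfl fun e he => by rw [card_filter_mem (hE e he)]; norm_num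
  have hdnn : ∀ v : V, 0 ≤ ∑ e ∈ E.filter (fun e => v ∈ e), y e := fun v =>
    Finset.sum_nonneg fun e he => (hy e (Finset.mem_of_mem_filter e he)).le
  have hTVsum : ∑ v ∈ TV, ∑ e ∈ E.filter (fun e => v ∈ e), y e = TV.card := by
    calc _ = ∑ v ∈ TV, (1 : ℝ) := Finset.sum_congr rfl fun v hv => (Finset.mem_filter.1 hv).2
      _ = _ := by simp
  have hTVsplit := Finset.sum_add_sum_compl TV
    (fun v => ∑ e ∈ E.filter (fun e => v ∈ e), y e)
  have hcompl : 0 ≤ ∑ v ∈ TVᶜ, ∑ e ∈ E.filter (fun e => v ∈ e), y e :=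
    Finset.sum_nonneg fun v _ => hdnn v
  -- each colour class has at least `2 a_j` edges, and at least `2 w_j + 1` if it is tight
  have hcolj : ∀ j, 2 * ∑ e ∈ E.filter (fun e => c e = j), y e + (if j ∈ TC then 1 else 0) ≤
      ((E.filter (fun e => c e = j)).card : ℝ) := by
    intro j
    split_ifs with hj
    · have hj' := (Finset.mem_filter.1 hj).2
      have hnej : (E.filter (fun e => c e = j)).Nonempty := by
        by_contra h
        rw [Finset.not_nonempty_iff_eq_empty] at h
        rw [h, Finset.sum_empty] at hj'
        have h0 : w j = 0 := by exact_mod_cast hj'.symm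
        have := hw j
        omega
      have := hlow j hnej
      rw [hj'] at this ⊢
      have h3 : 2 * w j < (E.filter (fun e => c e = j)).card := by exact_mod_cast this
      exact_mod_cast h3
    · rcases (E.filter (fun e => c e = j)).eq_empty_or_nonempty with h | h
      · simp [h]
      · linarith [hlow j h]
  have hcards : ∑ j, ((E.filter (fun e => c e = j)).card : ℝ) = E.card := by
    have := hsum (fun _ => 1)
    simpa using this
  have hcolsum : ∑ j, (2 * ∑ e ∈ E.filter (fun e => c e = j), y e + (if j ∈ TC then 1 else 0)) =
      2 * ∑ e ∈ E, y e + TC.card := by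
    rw [Finset.sum_add_distrib, ← Finset.mul_sum, hsum]
    simp
  have hge : 2 * ∑ e ∈ E, y e + TC.card ≤ (E.card : ℝ) := by
    rw [← hcards, ← hcolsum]
    exact Finset.sum_le_sum fun j _ => hcolj j
  have hfin' : (E.card : ℝ) ≤ TV.card + TC.card := by exact_mod_cast hfin
  -- so all these inequalities are equalities
  have hcard : E.card = TV.card + TC.card := by
    have : (E.card : ℝ) = TV.card + TC.card := by linarith
    exact_mod_cast this
  have hallV : ∀ e ∈ E, ∀ v, v ∈ e → v ∈ TV := by
    intro e he v hv
    by_contra hvT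
    have h0 : ∑ v ∈ TVᶜ, ∑ e ∈ E.filter (fun e => v ∈ e), y e = 0 := by linarith
    have h1 := (Finset.sum_eq_zero_iff_of_nonneg (fun v _ => hdnn v)).1 h0 v (by simpa using hvT)
    have h2 := (Finset.sum_eq_zero_iff_of_nonneg (fun e he =>
      (hy e (Finset.mem_of_mem_filter e he)).le)).1 h1 e (by simp [he, hv])
    exact (hy e he).ne' h2
  have hallC : ∀ e ∈ E, c e ∈ TC := by
    intro e he
    by_contra hcT
    have heq : ∑ j, (2 * ∑ e ∈ E.filter (fun e => c e = j), y e + (if j ∈ TC then 1 else 0)) =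
        ∑ j, ((E.filter (fun e => c e = j)).card : ℝ) := by
      rw [hcolsum, hcards]; linarith
    have h1 := (Finset.sum_eq_sum_iff_of_le (fun j _ => hcolj j)).1 heq (c e) (Finset.mem_univ _)
    rw [if_neg hcT] at h1
    have := hlow (c e) ⟨e, by simp [he]⟩
    linarith
  -- the vertex rows then add up to twice the sum of the colour rows, so `L` is not surjective
  have hsurj : Function.Surjective L :=
    (LinearMap.injective_iff_surjective_of_finrank_eq_finrank (by simp [hcard])).1 hinj
  obtain ⟨e₀, he₀⟩ := hne
  obtain ⟨z, hz⟩ := hsurj (Sum.elim (fun _ => 0) (fun _ => 1))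
  have hzv : ∀ v ∈ TV, ∑ e ∈ E.filter (fun e => v ∈ e), ext z e = 0 := fun v hv =>
    congrFun hz (Sum.inl ⟨v, hv⟩)
  have hzc : ∀ j ∈ TC, ∑ e ∈ E.filter (fun e => c e = j), ext z e = 1 := fun j hj =>
    congrFun hz (Sum.inr ⟨j, hj⟩)
  have hA : ∑ v ∈ TV, ∑ e ∈ E.filter (fun e => v ∈ e), ext z e = 2 * ∑ e ∈ E, ext z e := by
    rw [sum_degree_eq, Finset.mul_sum]
    refine Finset.sum_congr rfl fun e he => ?_
    have : TV.filter (fun v => v ∈ e) = univ.filter (fun v => v ∈ e) := by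
      ext v
      simp only [Finset.mem_filter, Finset.mem_univ, true_and]
      exact ⟨fun h => h.2, fun h => ⟨hallV e he v h, h⟩⟩
    rw [this, card_filter_mem (hE e he)]; norm_num
  rw [Finset.sum_eq_zero hzv] at hA
  have hB : ∑ j ∈ TC, ∑ e ∈ E.filter (fun e => c e = j), ext z e = ∑ e ∈ E, ext z e :=
    Finset.sum_fiberwise_of_maps_to hallC _
  rw [Finset.sum_congr rfl hzc] at hB
  have hpos : 0 < TC.card := Finset.card_pos.2 ⟨_, hallC e₀ he₀⟩
  have hpos' : (0 : ℝ) < TC.card := by exact_mod_cast hpos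
  simp at hB
  linarith

/-! ### The rounding theorem -/

/-- Rounding with cost `1 + ρ` per edge. In the double induction, `n` is the number of edges
and `m` the number of vertex and colour constraints that are not tight. -/
lemma rounding {V : Type*} [Fintype V] [DecidableEq V] {k : ℕ}
    (c : Sym2 V → Fin k) (w U : Fin k → ℕ) (hw : ∀ j, 1 ≤ w j)
    (ρ : ℝ) (hρ : 1 / 2 ≤ ρ) (hU : ∀ j, (w j : ℝ) ≤ ρ * U j) :
    ∀ (n m : ℕ) (E : Finset (Sym2 V)) (y : Sym2 V → ℝ), E.card = n →
      (univ.filter (fun v : V => ∑ e ∈ E.filter (fun e => v ∈ e), y e ≠ 1)).card +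
        (univ.filter (fun j => ∑ e ∈ E.filter (fun e => c e = j), y e ≠ w j)).card = m →
      (∀ e ∈ E, ¬ e.IsDiag) → (∀ e ∈ E, 0 ≤ y e) →
      (∀ v : V, ∑ e ∈ E.filter (fun e => v ∈ e), y e ≤ 1) →
      (∀ j, ∑ e ∈ E.filter (fun e => c e = j), y e ≤ w j) →
      ∃ M ⊆ E, IsMatchingSet M ∧ ∑ e ∈ E, y e ≤ (1 + ρ) * M.card ∧
        ∀ j, (M.filter (fun e => c e = j)).card ≤ U j := by
  classical
  intro n
  induction n using Nat.strong_induction_on with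
  | _ n ihn =>
  intro m
  induction m using Nat.strong_induction_on with
  | _ m ihm =>
  intro E y hn hm hE hy hdeg hcol
  rcases E.eq_empty_or_nonempty with rfl | hne
  · exact ⟨∅, by simp, by simp [IsMatchingSet], by simp, by simp⟩
  have mono : ∀ (E' : Finset (Sym2 V)), E' ⊆ E → ∀ (p : Sym2 V → Prop) [DecidablePred p],
      ∑ e ∈ E'.filter p, y e ≤ ∑ e ∈ E.filter p, y e := fun E' h p _ =>
    Finset.sum_le_sum_of_subset_of_nonneg (Finset.filter_subset_filter p h)
      fun e he _ => hy e (Finset.mem_of_mem_filter e he)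
  -- the induction hypothesis for proper subsets of `E`
  have sub : ∀ E' ⊂ E, ∃ M ⊆ E', IsMatchingSet M ∧ ∑ e ∈ E', y e ≤ (1 + ρ) * M.card ∧
      ∀ j, (M.filter (fun e => c e = j)).card ≤ U j := fun E' h =>
    ihn E'.card (hn ▸ Finset.card_lt_card h) _ E' y rfl rfl (fun e he => hE e (h.1 he))
      (fun e he => hy e (h.1 he)) (fun v => (mono E' h.1 _).trans (hdeg v))
      (fun j => (mono E' h.1 _).trans (hcol j))
  by_cases hzero : ∃ e ∈ E, y e = 0
  · obtain ⟨e, he, hye⟩ := hzero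
    obtain ⟨M, hM, h1, h2, h3⟩ := sub (E.erase e) (Finset.erase_ssubset he)
    refine ⟨M, hM.trans (Finset.erase_subset _ _), h1, ?_, h3⟩
    rw [← Finset.add_sum_erase E y he, hye, zero_add]
    exact h2
  push Not at hzero
  have hpos : ∀ e ∈ E, 0 < y e := fun e he => lt_of_le_of_ne (hy e he) (hzero e he).symm
  by_cases hbig : ∃ j, (E.filter (fun e => c e = j)).Nonempty ∧
      ((E.filter (fun e => c e = j)).card : ℝ) ≤ 2 * ∑ e ∈ E.filter (fun e => c e = j), y e
  · -- a colour class of average weight at least `1/2` is settled completely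
    obtain ⟨j, ⟨e₀, he₀⟩, hj⟩ := hbig
    set C := E.filter (fun e => c e = j) with hC
    have hCE : C ⊆ E := Finset.filter_subset _ _
    obtain ⟨N, hNC, hNm, hNU, hNs, hN⟩ := exists_color_matching y C 0 (U j) le_rfl
      (by
        simp only [Finset.sum_sub_distrib, ← Finset.mul_sum, Finset.sum_const, nsmul_eq_mul]
        linarith)
      (by
        rintro e he f hf hef ⟨v, hve, hvf⟩
        rw [← Finset.sum_pair hef]
        refine le_trans ?_ (hdeg v)
        refine Finset.sum_le_sum_of_subset_of_nonneg ?_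
          fun e he _ => hy e (Finset.mem_of_mem_filter e he)
        intro g hg
        rcases Finset.mem_insert.1 hg with rfl | hg
        · exact Finset.mem_filter.2 ⟨hCE he, hve⟩
        · rw [Finset.mem_singleton.1 hg]; exact Finset.mem_filter.2 ⟨hCE hf, hvf⟩)
    have hNE : N ⊆ E := hNC.trans hCE
    have hkill := touched_weight_le E hE y hy hdeg N hNE
    set D := E.filter (fun f => ∃ e ∈ N, Touch e f) with hD
    set S := (E.filter (fun f => ¬ ∃ e ∈ N, Touch e f)).filter (fun f => c f = j) with hS
    set E' := (E.filter (fun f => ¬ ∃ e ∈ N, Touch e f)).filter (fun f => ¬ c f = j) with hE'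
    have hE'E : E' ⊂ E := by
      refine (Finset.ssubset_iff_of_subset
        ((Finset.filter_subset _ _).trans (Finset.filter_subset _ _))).2 ⟨e₀, hCE he₀, ?_⟩
      simp [(Finset.mem_filter.1 he₀).2]
    obtain ⟨M, hM, hMm, hMc, hMU⟩ := sub E' hE'E
    have hsplit : ∑ e ∈ E, y e = ∑ e ∈ D, y e + (∑ e ∈ S, y e + ∑ e ∈ E', y e) := by
      rw [Finset.sum_filter_add_sum_filter_not, Finset.sum_filter_add_sum_filter_not]
    have hMnt : ∀ f ∈ M, (∀ e ∈ N, ¬ Touch e f) ∧ c f ≠ j := by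
      intro f hf
      have := hM hf
      simp only [hE', Finset.mem_filter] at this
      exact ⟨fun e he ht => this.1.2 ⟨e, he, ht⟩, this.2⟩
    have hdisj : Disjoint N M := by
      rw [Finset.disjoint_left]
      exact fun e heN heM => (hMnt e heM).1 e heN (touch_self e)
    have hNs' : (N.card : ℝ) ≤ 2 * ∑ e ∈ N, y e := by
      simp only [Finset.sum_sub_distrib, ← Finset.mul_sum, Finset.sum_const, nsmul_eq_mul] at hNs
      linarith
    have hcost : ∑ e ∈ D, y e + ∑ e ∈ S, y e ≤ (1 + ρ) * N.card := by
      rcases hN with hN | hN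
      · have hNS : ∑ e ∈ N, y e + ∑ e ∈ S, y e ≤ ∑ e ∈ C, y e := by
          rw [← Finset.sum_union]
          · refine Finset.sum_le_sum_of_subset_of_nonneg ?_ fun e he _ => hy e (hCE he)
            refine Finset.union_subset hNC fun f hf => ?_
            simp only [hS, Finset.mem_filter] at hf
            exact Finset.mem_filter.2 ⟨hf.1.1, hf.2⟩
          · rw [Finset.disjoint_left]
            intro e heN heS
            simp only [hS, Finset.mem_filter] at heS
            exact heS.1.2 ⟨e, heN, touch_self e⟩
        have h1 := hcol j
        have h2 := hU j
        rw [← hN] at h2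
        linarith
      · have hS0 : S = ∅ := by
          rw [Finset.eq_empty_iff_forall_notMem]
          intro f hf
          simp only [hS, Finset.mem_filter] at hf
          exact hf.1.2 (hN f (Finset.mem_filter.2 ⟨hf.1.1, hf.2⟩))
        rw [hS0, Finset.sum_empty]
        have : (0 : ℝ) ≤ N.card := by positivity
        nlinarith
    refine ⟨N ∪ M, Finset.union_subset hNE (hM.trans hE'E.1), ?_, ?_, ?_⟩
    · intro a ha b hb hab v hva hvb
      rcases Finset.mem_union.1 ha with ha | ha <;> rcases Finset.mem_union.1 hb with hb | hb
      · exact hNm a ha b hb hab v hva hvb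
      · exact (hMnt b hb).1 a ha ⟨v, hva, hvb⟩
      · exact (hMnt a ha).1 b hb ⟨v, hvb, hva⟩
      · exact hMm a ha b hb hab v hva hvb
    · rw [Finset.card_union_of_disjoint hdisj]
      push_cast
      linarith
    · intro i
      rw [Finset.filter_union]
      by_cases hij : i = j
      · subst hij
        have : M.filter (fun e => c e = i) = ∅ := by
          rw [Finset.filter_eq_empty_iff]; exact fun f hf => (hMnt f hf).2
        rw [this, Finset.union_empty]
        exact (Finset.card_filter_le _ _).trans hNU
      · have : N.filter (fun e => c e = i) = ∅ := by
          rw [Finset.filter_eq_empty_iff]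
          intro f hf hfi
          exact hij (hfi.symm.trans (Finset.mem_filter.1 (hNC hf)).2)
        rw [this, Finset.empty_union]
        exact hMU i
  -- otherwise the tight constraints leave a direction to move in
  push Not at hbig
  obtain ⟨z, hz0, hzv, hzc⟩ : ∃ z : Sym2 V → ℝ, (∃ e ∈ E, z e ≠ 0) ∧
      (∀ v : V, ∑ e ∈ E.filter (fun e => v ∈ e), y e = 1 →
        ∑ e ∈ E.filter (fun e => v ∈ e), z e = 0) ∧
      (∀ j, ∑ e ∈ E.filter (fun e => c e = j), y e = w j →
        ∑ e ∈ E.filter (fun e => c e = j), z e = 0) :=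
    exists_kernel c w hw E hne hE y hpos hbig
  obtain ⟨z, hz0, hzv, hzc, hzs⟩ : ∃ z : Sym2 V → ℝ, (∃ e ∈ E, z e ≠ 0) ∧
      (∀ v : V, ∑ e ∈ E.filter (fun e => v ∈ e), y e = 1 →
        ∑ e ∈ E.filter (fun e => v ∈ e), z e = 0) ∧
      (∀ j, ∑ e ∈ E.filter (fun e => c e = j), y e = w j →
        ∑ e ∈ E.filter (fun e => c e = j), z e = 0) ∧ 0 ≤ ∑ e ∈ E, z e := by
    rcases le_total 0 (∑ e ∈ E, z e) with h | h
    · exact ⟨z, hz0, hzv, hzc, h⟩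
    · refine ⟨fun e => - z e, ?_, fun v hv => ?_, fun j hj => ?_, ?_⟩
      · simpa using hz0
      · simp [hzv v hv]
      · simp [hzc j hj]
      · simpa using h
  let b : Sym2 V ⊕ (V ⊕ Fin k) → ℝ := Sum.elim y (Sum.elim
    (fun v => 1 - ∑ e ∈ E.filter (fun e => v ∈ e), y e)
    (fun j => w j - ∑ e ∈ E.filter (fun e => c e = j), y e))
  let r : Sym2 V ⊕ (V ⊕ Fin k) → ℝ := Sum.elim (fun e => - z e) (Sum.elim
    (fun v => ∑ e ∈ E.filter (fun e => v ∈ e), z e)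
    (fun j => ∑ e ∈ E.filter (fun e => c e = j), z e))
  obtain ⟨t, ht, hfeas, hhit⟩ := exists_first_hit (E.disjSum univ) b r
    (by
      rintro (e | v | j) h
      · exact hy e (by simpa using h)
      · simpa [b] using hdeg v
      · simpa [b] using hcol j)
    (by
      rintro (e | v | j) h hb
      · exact absurd hb (hpos e (by simpa using h)).ne'
      · exact hzv v (by simp only [b, Sum.elim_inr, Sum.elim_inl] at hb; linarith)
      · exact hzc j (by simp only [b, Sum.elim_inr] at hb; linarith))
    (by
      obtain ⟨e, he, hze⟩ := hz0
      by_cases hneg : ∃ f ∈ E, z f < 0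
      · obtain ⟨f, hf, hzf⟩ := hneg
        exact ⟨Sum.inl f, by simpa using hf, by simpa [r] using hzf⟩
      · push Not at hneg
        obtain ⟨v, hv, -⟩ := touch_self e
        refine ⟨Sum.inr (Sum.inl v), by simp, ?_⟩
        change 0 < ∑ e ∈ E.filter (fun e => v ∈ e), z e
        refine Finset.sum_pos' (fun f hf => hneg f (Finset.mem_of_mem_filter f hf))
          ⟨e, by simp [he, hv], lt_of_le_of_ne (hneg e he) hze.symm⟩)
  set y' : Sym2 V → ℝ := fun e => y e + t * z e with hy'
  have hsum' : ∀ s : Finset (Sym2 V), ∑ e ∈ s, y' e = ∑ e ∈ s, y e + t * ∑ e ∈ s, z e := by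
    intro s; simp [hy', Finset.sum_add_distrib, Finset.mul_sum]
  have hy'0 : ∀ e ∈ E, 0 ≤ y' e := fun e he => by
    have := hfeas (Sum.inl e) (by simpa using he)
    simp only [b, r, Sum.elim_inl] at this
    simp only [hy']; linarith
  have hdeg' : ∀ v : V, ∑ e ∈ E.filter (fun e => v ∈ e), y' e ≤ 1 := fun v => by
    have := hfeas (Sum.inr (Sum.inl v)) (by simp)
    simp only [b, r, Sum.elim_inl, Sum.elim_inr] at this
    rw [hsum']; linarith
  have hcol' : ∀ j, ∑ e ∈ E.filter (fun e => c e = j), y' e ≤ w j := fun j => by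
    have := hfeas (Sum.inr (Sum.inr j)) (by simp)
    simp only [b, r, Sum.elim_inr] at this
    rw [hsum']; linarith
  have hval : ∑ e ∈ E, y e ≤ ∑ e ∈ E, y' e := by
    rw [hsum']; nlinarith
  have hsubV : (univ.filter (fun v : V => ∑ e ∈ E.filter (fun e => v ∈ e), y' e ≠ 1)) ⊆
      univ.filter (fun v : V => ∑ e ∈ E.filter (fun e => v ∈ e), y e ≠ 1) := by
    intro v hv
    simp only [Finset.mem_filter, Finset.mem_univ, true_and] at hv ⊢
    intro h
    exact hv (by rw [hsum', h, hzv v h]; simp)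
  have hsubC : (univ.filter (fun j => ∑ e ∈ E.filter (fun e => c e = j), y' e ≠ w j)) ⊆
      univ.filter (fun j => ∑ e ∈ E.filter (fun e => c e = j), y e ≠ w j) := by
    intro v hv
    simp only [Finset.mem_filter, Finset.mem_univ, true_and] at hv ⊢
    intro h
    exact hv (by rw [hsum', h, hzc v h]; simp)
  suffices h : ∃ M ⊆ E, IsMatchingSet M ∧ ∑ e ∈ E, y' e ≤ (1 + ρ) * M.card ∧
      ∀ j, (M.filter (fun e => c e = j)).card ≤ U j by
    obtain ⟨M, h0, h1, h2, h3⟩ := h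
    exact ⟨M, h0, h1, hval.trans h2, h3⟩
  obtain ⟨i, hi, hbi, hhit⟩ := hhit
  rcases i with e | v | j
  · -- an edge weight has dropped to zero
    have he : e ∈ E := by simpa using hi
    have hye : y' e = 0 := by
      simp only [b, r, Sum.elim_inl] at hhit
      simp only [hy']; linarith
    have hsube : E.erase e ⊆ E := Finset.erase_subset _ _
    have mono' : ∀ (p : Sym2 V → Prop) [DecidablePred p],
        ∑ e ∈ (E.erase e).filter p, y' e ≤ ∑ e ∈ E.filter p, y' e := fun p _ =>
      Finset.sum_le_sum_of_subset_of_nonneg (Finset.filter_subset_filter p hsube)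
        fun e he _ => hy'0 e (Finset.mem_of_mem_filter e he)
    obtain ⟨M, hM, h1, h2, h3⟩ := ihn (E.erase e).card
      (hn ▸ Finset.card_lt_card (Finset.erase_ssubset he)) _ (E.erase e) y' rfl rfl
      (fun f hf => hE f (hsube hf)) (fun f hf => hy'0 f (hsube hf))
      (fun v => (mono' _).trans (hdeg' v)) (fun j => (mono' _).trans (hcol' j))
    refine ⟨M, hM.trans hsube, h1, ?_, h3⟩
    rw [← Finset.add_sum_erase E y' he, hye, zero_add]
    exact h2
  · -- a vertex constraint has become tight
    refine ihm _ ?_ E y' hn rfl hE hy'0 hdeg' hcol'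
    rw [← hm]
    refine Nat.add_lt_add_of_lt_of_le (Finset.card_lt_card ?_) (Finset.card_le_card hsubC)
    refine (Finset.ssubset_iff_of_subset hsubV).2 ⟨v, ?_, ?_⟩
    · simp only [b, Sum.elim_inl, Sum.elim_inr] at hbi
      simp only [Finset.mem_filter, Finset.mem_univ, true_and]
      intro h; linarith
    · simp only [b, r, Sum.elim_inl, Sum.elim_inr] at hhit
      simp only [Finset.mem_filter, Finset.mem_univ, true_and, not_not, hsum']
      linarith
  · -- a colour constraint has become tight
    refine ihm _ ?_ E y' hn rfl hE hy'0 hdeg' hcol'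
    rw [← hm]
    refine Nat.add_lt_add_of_le_of_lt (Finset.card_le_card hsubV) (Finset.card_lt_card ?_)
    refine (Finset.ssubset_iff_of_subset hsubC).2 ⟨j, ?_, ?_⟩
    · simp only [b, Sum.elim_inr] at hbi
      simp only [Finset.mem_filter, Finset.mem_univ, true_and]
      intro h; linarith
    · simp only [b, r, Sum.elim_inr] at hhit
      simp only [Finset.mem_filter, Finset.mem_univ, true_and, not_not, hsum']
      linarith

/-- Bi-criteria `(2/(3+λ), 2/(λ+1) + 1/w_j)` rounding for uniform-weight Bounded Color
Matching: for any fractional solution `x` of the LP (with blossom inequalities) and any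
`λ ∈ [0,1]`, there is a matching `M` with `|M| ≥ (2/(3+λ)) ∑_e x_e` that uses at most
`2w_j/(λ+1) + 1` edges of each color `j`. -/
theorem bicriteria_uniform_bcm {V : Type*} [Fintype V] [DecidableEq V]
    (G : SimpleGraph V) [DecidableRel G.Adj]
    (k : ℕ) (c : Sym2 V → Fin k) (w : Fin k → ℕ) (hw : ∀ j, 1 ≤ w j)
    (lam : ℝ) (hlam₀ : 0 ≤ lam) (hlam₁ : lam ≤ 1)
    (x : Sym2 V → ℝ) (hx : ∀ e ∈ G.edgeFinset, 0 ≤ x e ∧ x e ≤ 1)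
    (hdeg : ∀ v : V, ∑ e ∈ G.edgeFinset.filter (fun e => v ∈ e), x e ≤ 1)
    (hblossom : ∀ S : Finset V, Odd S.card →
      ∑ e ∈ G.edgeFinset ∩ S.sym2, x e ≤ ((S.card : ℝ) - 1) / 2)
    (hcol : ∀ j : Fin k, ∑ e ∈ G.edgeFinset.filter (fun e => c e = j), x e ≤ (w j : ℝ)) :
    ∃ M ⊆ G.edgeFinset, IsMatchingSet M ∧
      (2 / (3 + lam)) * ∑ e ∈ G.edgeFinset, x e ≤ (M.card : ℝ) ∧
      ∀ j : Fin k, ((M.filter (fun e => c e = j)).card : ℝ) ≤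
        2 * (w j : ℝ) / (lam + 1) + 1 := by
  obtain ⟨M, hM, h1, h2, h3⟩ := rounding c w (fun j => ⌈2 * (w j : ℝ) / (lam + 1)⌉₊) hw
    ((1 + lam) / 2) (by linarith)
    (fun j => by
      have h := Nat.le_ceil (2 * (w j : ℝ) / (lam + 1))
      rw [div_le_iff₀ (by linarith)] at h
      linarith)
    _ _ G.edgeFinset x rfl rfl
    (fun e he => G.not_isDiag_of_mem_edgeSet (by simpa using he))
    (fun e he => (hx e he).1) hdeg hcol
  refine ⟨M, hM, h1, ?_, fun j => ?_⟩
  · rw [div_mul_eq_mul_div, div_le_iff₀ (by linarith)]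
    linarith
  · have h4 : ((M.filter (fun e => c e = j)).card : ℝ) ≤
        (⌈2 * (w j : ℝ) / (lam + 1)⌉₊ : ℝ) := by exact_mod_cast h3 j
    exact h4.trans (Nat.ceil_lt_add_one (by positivity)).le
end

section
/- Let G = (V, E) be a finite simple undirected graph with edge colors and integer color bounds w_j ≥ 1. Let x : E → [0, 1] satisfy Σ_{e∈δ(v)} x_e ≤ 1 for all v ∈ V, Σ_{e∈E(S)} x_e ≤ (|S| − 1)/2 for every odd-cardinality subset S ⊆ V, and Σ_{e∈E_j} x_e ≤ w_j for all colors j. Then there exists a matching M ⊆ E such that |M ∩ E_j| ≤ w_j for every color j and |M| ≥ (1/2) · Σ_{e∈E} x_e. -/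
open Finset

/-! ### Ratio test -/

/-- Moving from a point satisfying finitely many affine inequalities along a direction
that decreases at least one of them, one can stop exactly when one of them becomes an equality. -/
lemma exists_first_tight {κ : Type*} (S : Finset κ) (a b : κ → ℝ)
    (ha : ∀ i ∈ S, 0 ≤ a i) (hb : ∃ i ∈ S, b i < 0) :
    ∃ t : ℝ, 0 ≤ t ∧ (∀ i ∈ S, 0 ≤ a i + t * b i) ∧ ∃ i ∈ S, b i < 0 ∧ a i + t * b i = 0 := by
  obtain ⟨j, hj, hbj⟩ := hb
  obtain ⟨i, hi, hmin⟩ := (S.filter (fun i => b i < 0)).exists_min_image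
    (fun i => a i / (-b i)) ⟨j, by simp [hj, hbj]⟩
  simp only [mem_filter] at hi hmin
  have ht : 0 ≤ a i / (-b i) := div_nonneg (ha i hi.1) (by linarith [hi.2])
  refine ⟨a i / (-b i), ht, fun l hl => ?_, i, hi.1, hi.2, ?_⟩
  · by_cases h : b l < 0
    · have h1 := hmin l ⟨hl, h⟩
      rw [le_div_iff₀ (by linarith)] at h1
      linarith
    · have := mul_nonneg ht (not_lt.mp h)
      linarith [ha l hl]
  · have : b i ≠ 0 := hi.2.ne
    field_simp
    ring

/-! ### Loads of points in a hypergraph -/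

/-- The load of the point `v`: total `x`-weight of the hyperedges of `A` containing `v`. -/
def load {ι P : Type*} [DecidableEq P] (I : ι → Finset P) (A : Finset ι) (x : ι → ℝ) (v : P) : ℝ :=
  ∑ e ∈ A, if v ∈ I e then x e else 0

lemma sum_load {ι P : Type*} [DecidableEq P] (I : ι → Finset P) (A : Finset ι)
    (x : ι → ℝ) (S : Finset P) :
    ∑ v ∈ S, load I A x v = ∑ e ∈ A, (#(S ∩ I e) : ℝ) * x e := by
  unfold load
  rw [sum_comm]
  refine sum_congr rfl fun e _ => ?_
  rw [← sum_filter, sum_const, nsmul_eq_mul, filter_mem_eq_inter]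

lemma load_mono {ι P : Type*} [DecidableEq P] {I : ι → Finset P} {A B : Finset ι}
    {x : ι → ℝ} (hx : ∀ e ∈ A, 0 ≤ x e) (h : B ⊆ A) (v : P) : load I B x v ≤ load I A x v := by
  refine sum_le_sum_of_subset_of_nonneg h fun e he _ => ?_
  split_ifs
  exacts [hx e he, le_rfl]

/-- Each of the three points of `e` carries load at most `1`, and `e` itself is counted three
times in the sum of these loads. -/
lemma sum_meeting_le {ι P : Type*} [DecidableEq P] {I : ι → Finset P} {A : Finset ι}
    {x : ι → ℝ} (hI : ∀ e ∈ A, #(I e) = 3) (hx : ∀ e ∈ A, 0 ≤ x e)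
    (hl : ∀ v, load I A x v ≤ 1) {e : ι} (he : e ∈ A) :
    ∑ f ∈ A with ¬ Disjoint (I e) (I f), x f ≤ 3 - 2 * x e := by
  classical
  have h1 : ∑ v ∈ I e, load I A x v ≤ 3 := by
    calc _ ≤ ∑ v ∈ I e, (1 : ℝ) := sum_le_sum fun v _ => hl v
      _ = 3 := by simp [hI e he]
  have h2 : ∑ f ∈ A, ((if ¬ Disjoint (I e) (I f) then x f else 0) + if f = e then 2 * x f else 0)
      ≤ ∑ v ∈ I e, load I A x v := by
    rw [sum_load]
    refine sum_le_sum fun f hf => ?_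
    by_cases hfe : f = e
    · subst hfe
      have : I f ≠ ∅ := by
        intro h0
        have := hI f hf
        simp [h0] at this
      rw [if_pos (by simpa using this), if_pos rfl, inter_self, hI f hf]
      push_cast
      linarith
    · rw [if_neg hfe, add_zero]
      split_ifs with hd
      · exact mul_nonneg (Nat.cast_nonneg _) (hx f hf)
      · have : 1 ≤ #(I e ∩ I f) :=
          card_pos.mpr (nonempty_iff_ne_empty.mpr fun h => hd (disjoint_iff_inter_eq_empty.mpr h))
        have h3 : (1 : ℝ) ≤ #(I e ∩ I f) := by exact_mod_cast this
        nlinarith [hx f hf]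
  rw [sum_add_distrib, sum_ite_eq' A e, if_pos he, ← sum_filter] at h2
  linarith

/-! ### A direction preserving the tight points -/

/-- If all points of `T` have degree at least `3` and the points can be weighted by nonzero `μ` so
that every triple has total weight zero, some nonzero `d` puts load zero on every point of `T`. -/
lemma exists_kernel_s17 {ι P : Type*} [DecidableEq P] {I : ι → Finset P} {A : Finset ι}
    (T : Finset P) (hA : A.Nonempty) (hI : ∀ e ∈ A, #(I e) = 3)
    (hT : ∀ v ∈ T, 3 ≤ #{e ∈ A | v ∈ I e})
    (μ : P → ℝ) (hμ : ∀ v, μ v ≠ 0) (hμI : ∀ e ∈ A, ∑ v ∈ I e, μ v = 0) :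
    ∃ d : ι → ℝ, (∃ e ∈ A, d e ≠ 0) ∧ ∀ v ∈ T, load I A d v = 0 := by
  classical
  let L : (A → ℝ) →ₗ[ℝ] (T → ℝ) :=
    { toFun := fun d v => ∑ e : A, if v.1 ∈ I e.1 then d e else 0
      map_add' := by
        intro d d'
        ext v
        simp only [Pi.add_apply]
        rw [← sum_add_distrib]
        refine sum_congr rfl fun e _ => ?_
        split_ifs <;> simp
      map_smul' := by
        intro r d
        ext v
        simp only [Pi.smul_apply, smul_eq_mul, RingHom.id_apply]
        rw [mul_sum]
        refine sum_congr rfl fun e _ => ?_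
        split_ifs <;> simp }
  by_cases hL : Function.Injective L
  · exfalso
    have hle : #A ≤ #T := by
      have := LinearMap.finrank_le_finrank_of_injective hL
      simpa using this
    have hdc : ∑ v ∈ T, #{e ∈ A | v ∈ I e} = ∑ e ∈ A, #(T ∩ I e) := by
      simp_rw [← filter_mem_eq_inter]
      exact sum_card_bipartiteAbove_eq_sum_card_bipartiteBelow (fun v e => v ∈ I e)
    have h1 : #T * 3 ≤ ∑ v ∈ T, #{e ∈ A | v ∈ I e} := by
      simpa using card_nsmul_le_sum T _ 3 hT
    have hb : ∀ e ∈ A, #(T ∩ I e) ≤ 3 := fun e he =>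
      (card_le_card inter_subset_right).trans (hI e he).le
    have h2 : ∑ e ∈ A, #(T ∩ I e) ≤ #A * 3 := by
      simpa using sum_le_card_nsmul A _ 3 hb
    have heq : #A = #T := by omega
    have hsub : ∀ e ∈ A, I e ⊆ T := by
      intro e he
      have h3 : ∑ e ∈ A, #(T ∩ I e) = ∑ e ∈ A, 3 := by
        simp only [sum_const, smul_eq_mul]
        omega
      have h4 := (sum_eq_sum_iff_of_le hb).mp h3 e he
      have h5 : T ∩ I e = I e := eq_of_subset_of_card_le inter_subset_right (by rw [h4, hI e he])
      exact inter_eq_right.mp h5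
    have hsurj : Function.Surjective L :=
      (LinearMap.injective_iff_surjective_of_finrank_eq_finrank (by simpa using heq)).mp hL
    obtain ⟨v, hv⟩ : T.Nonempty := by
      rw [← card_pos, ← heq]
      exact hA.card_pos
    -- The functional `μ` vanishes on the range of `L`, but not on the unit vector at `v`.
    obtain ⟨d, hd⟩ := hsurj (Pi.single ⟨v, hv⟩ 1)
    have h6 : ∑ u : T, μ u * L d u = 0 := by
      change ∑ u : T, μ u * (∑ e : A, if u.1 ∈ I e.1 then d e else 0) = 0
      simp_rw [mul_sum]
      rw [sum_comm]
      refine sum_eq_zero fun e _ => ?_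
      have h7 : ∑ u ∈ T, (μ u * if u ∈ I e.1 then d e else 0) = 0 := by
        simp_rw [mul_ite, mul_zero]
        rw [← sum_filter, filter_mem_eq_inter, inter_eq_right.mpr (hsub e.1 e.2), ← sum_mul,
          hμI e.1 e.2, zero_mul]
      refine Eq.trans ?_ h7
      exact sum_coe_sort T (fun u => (μ u * if u ∈ I e.1 then d e else 0))
    rw [hd, sum_eq_single ⟨v, hv⟩] at h6
    · simp [hμ v] at h6
    · intro u _ hu
      simp [hu]
    · simp
  · rw [← LinearMap.ker_eq_bot, ← ne_eq, Submodule.ne_bot_iff] at hL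
    obtain ⟨d, hd, hd0⟩ := hL
    obtain ⟨e, he⟩ := Function.ne_iff.mp hd0
    refine ⟨fun e => if h : e ∈ A then d ⟨e, h⟩ else 0, ⟨e.1, e.2, by simpa using he⟩, ?_⟩
    intro v hv
    have h8 : L d ⟨v, hv⟩ = 0 := by rw [LinearMap.mem_ker.mp hd]; rfl
    rw [← h8]
    unfold load
    rw [← sum_coe_sort A]
    exact sum_congr rfl fun e _ => by simp

lemma load_add_mul {ι P : Type*} [DecidableEq P] (I : ι → Finset P) (A : Finset ι)
    (x d : ι → ℝ) (t : ℝ) (v : P) :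
    load I A (fun e => x e + t * d e) v = load I A x v + t * load I A d v := by
  unfold load
  rw [mul_sum, ← sum_add_distrib]
  refine sum_congr rfl fun e _ => ?_
  split_ifs <;> simp

/-- From a fractional matching one can move along a direction that keeps the tight points tight,
without decreasing the total, until some hyperedge gets weight zero or a new point gets tight. -/
lemma exists_improved {ι P : Type*} [Fintype P] [DecidableEq P] {I : ι → Finset P} {A : Finset ι}
    {x d : ι → ℝ} (hI : ∀ e ∈ A, #(I e) = 3) (hx : ∀ e ∈ A, 0 ≤ x e)
    (hl : ∀ v, load I A x v ≤ 1) (hd : ∃ e ∈ A, d e ≠ 0) (hs : 0 ≤ ∑ e ∈ A, d e)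
    (hker : ∀ v, load I A x v = 1 → load I A d v = 0) :
    ∃ y : ι → ℝ, (∀ e ∈ A, 0 ≤ y e) ∧ (∀ v, load I A y v ≤ 1) ∧
      ∑ e ∈ A, x e ≤ ∑ e ∈ A, y e ∧ (∀ v, load I A x v = 1 → load I A y v = 1) ∧
      ((∃ e ∈ A, y e = 0) ∨ ∃ v, load I A x v ≠ 1 ∧ load I A y v = 1) := by
  classical
  let S : Finset (ι ⊕ P) := A.disjSum univ
  let a : ι ⊕ P → ℝ := Sum.elim x (fun v => 1 - load I A x v)
  let b : ι ⊕ P → ℝ := Sum.elim d (fun v => -load I A d v)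
  have ha : ∀ i ∈ S, 0 ≤ a i := by
    rintro (e | v) hi
    · exact hx e (inl_mem_disjSum.mp hi)
    · exact sub_nonneg.mpr (hl v)
  have hb : ∃ i ∈ S, b i < 0 := by
    by_contra! hcon
    have hd0 : ∀ e ∈ A, 0 ≤ d e := fun e he => hcon (Sum.inl e) (inl_mem_disjSum.mpr he)
    obtain ⟨e, he, hde⟩ := hd
    obtain ⟨v, hv⟩ : (I e).Nonempty := card_pos.mp (by rw [hI e he]; norm_num)
    have h1 : -load I A d v ≥ 0 := hcon (Sum.inr v) (inr_mem_disjSum.mpr (mem_univ v))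
    have h2 : d e ≤ load I A d v := by
      have h3 := single_le_sum (f := fun f => if v ∈ I f then d f else 0) (s := A)
        (fun f hf => by
          split_ifs
          exacts [hd0 f hf, le_rfl]) he
      simpa [hv, load] using h3
    exact hde (le_antisymm (by linarith) (hd0 e he))
  obtain ⟨t, ht, hall, i, hi, hbi, hti⟩ := exists_first_tight S a b ha hb
  refine ⟨fun e => x e + t * d e, fun e he => hall (Sum.inl e) (inl_mem_disjSum.mpr he),
    fun v => ?_, ?_, fun v hv => ?_, ?_⟩
  · have h1 : 0 ≤ (1 - load I A x v) + t * (-load I A d v) :=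
      hall (Sum.inr v) (inr_mem_disjSum.mpr (mem_univ v))
    rw [load_add_mul]
    linarith
  · rw [sum_add_distrib, ← mul_sum]
    linarith [mul_nonneg ht hs]
  · rw [load_add_mul, hker v hv, hv]
    simp
  · rcases i with e | v
    · exact Or.inl ⟨e, inl_mem_disjSum.mp hi, hti⟩
    · refine Or.inr ⟨v, fun hv => ?_, ?_⟩
      · have h1 : -load I A d v < 0 := hbi
        rw [hker v hv] at h1
        simp at h1
      · have h1 : (1 - load I A x v) + t * (-load I A d v) = 0 := hti
        rw [load_add_mul]
        linarith

/-! ### Integral matchings in 3-uniform hypergraphs -/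

/-- A 3-uniform hypergraph with nonzero point weights `μ` summing to zero on every triple has an
integral matching of at least half the size of any fractional matching. -/
theorem exists_disjoint_triples {ι P : Type*} [Fintype P] [DecidableEq P] (I : ι → Finset P)
    (μ : P → ℝ) (hμ : ∀ v, μ v ≠ 0) (n m : ℕ) : ∀ (A : Finset ι) (x : ι → ℝ),
    #A = n → #{v | load I A x v ≠ 1} = m →
    (∀ e ∈ A, #(I e) = 3) → (∀ e ∈ A, ∑ v ∈ I e, μ v = 0) →
    (∀ e ∈ A, 0 ≤ x e) → (∀ v, load I A x v ≤ 1) →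
    ∃ M ⊆ A, (∀ e ∈ M, ∀ f ∈ M, e ≠ f → Disjoint (I e) (I f)) ∧
      ∑ e ∈ A, x e ≤ 2 * (#M : ℝ) := by
  classical
  induction n using Nat.strong_induction_on generalizing m with
  | _ n ihn =>
  induction m using Nat.strong_induction_on with
  | _ m ihm =>
  intro A x hn hm hI hμI hx hl
  -- A hyperedge of weight zero can be deleted.
  have drop : ∀ y : ι → ℝ, (∀ e ∈ A, 0 ≤ y e) → (∀ v, load I A y v ≤ 1) →
      (∃ e ∈ A, y e = 0) → ∃ M ⊆ A, (∀ e ∈ M, ∀ f ∈ M, e ≠ f → Disjoint (I e) (I f)) ∧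
      ∑ e ∈ A, y e ≤ 2 * (#M : ℝ) := by
    rintro y hy hly ⟨e, he, hye⟩
    obtain ⟨M, hMA, hMd, hMs⟩ := ihn #(A.erase e) (hn ▸ card_erase_lt_of_mem he) _ (A.erase e) y
      rfl rfl (fun f hf => hI f (mem_of_mem_erase hf)) (fun f hf => hμI f (mem_of_mem_erase hf))
      (fun f hf => hy f (mem_of_mem_erase hf))
      (fun v => (load_mono hy (erase_subset e A) v).trans (hly v))
    refine ⟨M, hMA.trans (erase_subset e A), hMd, ?_⟩
    rw [← add_sum_erase A y he, hye, zero_add]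
    exact hMs
  by_cases hz : ∃ e ∈ A, x e = 0
  · exact drop x hx hl hz
  by_cases hN : ∃ e ∈ A, ∑ f ∈ A with ¬ Disjoint (I e) (I f), x f ≤ 2
  · obtain ⟨e, he, hsum⟩ := hN
    let B := A.filter (fun f => Disjoint (I e) (I f))
    have hBA : B ⊆ A := filter_subset _ _
    have heB : e ∉ B := by
      intro h
      have h1 := (mem_filter.mp h).2
      rw [disjoint_self] at h1
      have h2 := hI e he
      simp_all
    have hlt : #B < n := hn ▸ card_lt_card ⟨hBA, fun h => heB (h he)⟩
    obtain ⟨M, hMB, hMd, hMs⟩ := ihn #B hlt _ B x rfl rfl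
      (fun f hf => hI f (hBA hf)) (fun f hf => hμI f (hBA hf))
      (fun f hf => hx f (hBA hf)) (fun v => (load_mono hx hBA v).trans (hl v))
    have hdis : ∀ f ∈ M, Disjoint (I e) (I f) := fun f hf => (mem_filter.mp (hMB hf)).2
    refine ⟨insert e M, insert_subset he (hMB.trans hBA), ?_, ?_⟩
    · intro f hf g hg hfg
      rcases mem_insert.mp hf with rfl | hf' <;> rcases mem_insert.mp hg with rfl | hg'
      · exact absurd rfl hfg
      · exact hdis g hg'
      · exact (hdis f hf').symm
      · exact hMd f hf' g hg' hfg
    · rw [card_insert_of_notMem fun h => heB (hMB h),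
        ← sum_filter_add_sum_filter_not A (fun f => Disjoint (I e) (I f))]
      push_cast
      linarith
  rcases A.eq_empty_or_nonempty with rfl | hA
  · exact ⟨∅, subset_rfl, by simp, by simp⟩
  -- No hyperedge has weight at least `1 / 2`, so tight points have degree at least `3`.
  have hdeg : ∀ v ∈ univ.filter (fun v => load I A x v = 1), 3 ≤ #{e ∈ A | v ∈ I e} := by
    intro v hv
    have hv1 : load I A x v = 1 := (mem_filter.mp hv).2
    unfold load at hv1
    rw [← sum_filter] at hv1
    by_contra! hlt
    have hne : (A.filter (fun e => v ∈ I e)).Nonempty := by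
      rw [nonempty_iff_ne_empty]
      intro h
      rw [h] at hv1
      simp at hv1
    have hle : ∑ e ∈ A with v ∈ I e, (1 / 2 : ℝ) ≤ ∑ e ∈ A with v ∈ I e, x e := by
      rw [hv1, sum_const, nsmul_eq_mul]
      have : (#{e ∈ A | v ∈ I e} : ℝ) ≤ 2 := by exact_mod_cast Nat.lt_succ_iff.mp hlt
      linarith
    obtain ⟨e, he, hxe⟩ := exists_le_of_sum_le hne hle
    have heA := (mem_filter.mp he).1
    exact hN ⟨e, heA, (sum_meeting_le hI hx hl heA).trans (by linarith)⟩
  obtain ⟨d, hd0, hker⟩ := exists_kernel_s17 _ hA hI hdeg μ hμ hμI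
  -- Replacing `d` by `-d` if necessary, the total does not decrease along `d`.
  obtain ⟨d, hd0, hker, hs⟩ : ∃ d : ι → ℝ, (∃ e ∈ A, d e ≠ 0) ∧
      (∀ v, load I A x v = 1 → load I A d v = 0) ∧ 0 ≤ ∑ e ∈ A, d e := by
    have hker' : ∀ v, load I A x v = 1 → load I A d v = 0 := fun v hv => hker v (by simp [hv])
    rcases le_total 0 (∑ e ∈ A, d e) with h | h
    · exact ⟨d, hd0, hker', h⟩
    · refine ⟨fun e => -d e, by simpa using hd0, fun v hv => ?_, by simpa using h⟩
      have h1 := load_add_mul I A 0 d (-1) v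
      simp only [Pi.zero_apply, zero_add, neg_mul, one_mul, hker' v hv] at h1
      rw [h1]
      simp [load]
  obtain ⟨y, hy, hly, hxy, htight, hnew⟩ := exists_improved hI hx hl hd0 hs hker
  suffices ∃ M ⊆ A, (∀ e ∈ M, ∀ f ∈ M, e ≠ f → Disjoint (I e) (I f)) ∧
      ∑ e ∈ A, y e ≤ 2 * (#M : ℝ) by
    obtain ⟨M, h1, h2, h3⟩ := this
    exact ⟨M, h1, h2, hxy.trans h3⟩
  rcases hnew with h | ⟨v, hv, hv'⟩
  · exact drop y hy hly h
  · refine ihm #{v | load I A y v ≠ 1} ?_ A y hn rfl hI hμI hy hly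
    rw [← hm]
    refine card_lt_card ⟨?_, ?_⟩
    · intro u hu
      simp only [mem_filter, mem_univ, true_and] at hu ⊢
      exact fun h => hu (htight u h)
    · intro h
      have h1 := h (show v ∈ _ by simpa using hv)
      simp [hv'] at h1

/-! ### Reduction of bounded color matching to triples -/

/-- `1/2`-approximation for uniform-weight Bounded Color Matching without violating the
color bounds: for any fractional solution `x` of the LP (with blossom inequalities),
there is a matching `M` with `|M ∩ E_j| ≤ w_j` for all colors `j` and
`|M| ≥ (1/2) ∑_e x_e`. -/
theorem half_approx_uniform_bcm {V : Type*} [Fintype V] [DecidableEq V]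
    (G : SimpleGraph V) [DecidableRel G.Adj]
    (k : ℕ) (c : Sym2 V → Fin k) (w : Fin k → ℕ) (hw : ∀ j, 1 ≤ w j)
    (x : Sym2 V → ℝ) (hx : ∀ e ∈ G.edgeFinset, 0 ≤ x e ∧ x e ≤ 1)
    (hdeg : ∀ v : V, ∑ e ∈ G.edgeFinset.filter (fun e => v ∈ e), x e ≤ 1)
    (hblossom : ∀ S : Finset V, Odd S.card →
      ∑ e ∈ G.edgeFinset ∩ S.sym2, x e ≤ ((S.card : ℝ) - 1) / 2)
    (hcol : ∀ j : Fin k, ∑ e ∈ G.edgeFinset.filter (fun e => c e = j), x e ≤ (w j : ℝ)) :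
    ∃ M ⊆ G.edgeFinset, IsMatchingSet M ∧
      (∀ j : Fin k, (M.filter (fun e => c e = j)).card ≤ w j) ∧
      (1 / 2 : ℝ) * ∑ e ∈ G.edgeFinset, x e ≤ (M.card : ℝ) := by
  classical
  -- The triple of `⟨e, i⟩` consists of the endpoints of `e` and the `i`-th copy of its color.
  let I : (Σ e : Sym2 V, Fin (w (c e))) → Finset (V ⊕ (Σ j : Fin k, Fin (w j))) :=
    fun p => p.1.toFinset.disjSum {⟨c p.1, p.2⟩}
  let A : Finset (Σ e : Sym2 V, Fin (w (c e))) := G.edgeFinset.sigma fun _ => univ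
  let y : (Σ e : Sym2 V, Fin (w (c e))) → ℝ := fun p => x p.1 / w (c p.1)
  let μ : V ⊕ (Σ j : Fin k, Fin (w j)) → ℝ := Sum.elim (fun _ => 1) (fun _ => -2)
  have hw0 : ∀ j, (0 : ℝ) < w j := fun j => by exact_mod_cast hw j
  have hμ : ∀ v, μ v ≠ 0 := by
    rintro (v | v) <;> simp [μ]
  have hA : ∀ p, p ∈ A ↔ p.1 ∈ G.edgeFinset := fun p => by simp [A]
  have hc2 : ∀ p ∈ A, #p.1.toFinset = 2 := fun p hp =>
    Sym2.card_toFinset_of_not_isDiag _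
      (G.not_isDiag_of_mem_edgeSet (SimpleGraph.mem_edgeFinset.mp ((hA p).mp hp)))
  have hI : ∀ p ∈ A, #(I p) = 3 := fun p hp => by
    simp only [I, card_disjSum, hc2 p hp, card_singleton]
  have hμI : ∀ p ∈ A, ∑ v ∈ I p, μ v = 0 := fun p hp => by
    simp only [I, sum_disjSum, μ, Sum.elim_inl, Sum.elim_inr, sum_const, hc2 p hp, card_singleton]
    norm_num
  have hy : ∀ p ∈ A, 0 ≤ y p := fun p hp =>
    div_nonneg (hx p.1 ((hA p).mp hp)).1 (Nat.cast_nonneg _)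
  have hspread : ∀ e, ∑ _i : Fin (w (c e)), x e / w (c e) = x e := fun e => by
    have := (hw0 (c e)).ne'
    rw [sum_const, card_univ, Fintype.card_fin, nsmul_eq_mul]
    field_simp
  have hl : ∀ v, load I A y v ≤ 1 := by
    rintro (v | ⟨j, i⟩)
    · refine le_of_eq_of_le ?_ (hdeg v)
      unfold load
      rw [sum_sigma, sum_filter]
      refine sum_congr rfl fun e _ => ?_
      by_cases hv : v ∈ e
      · simp only [I, inl_mem_disjSum, Sym2.mem_toFinset, hv, if_true, y]
        exact hspread e
      · simp [I, hv]
    · have h1 : load I A y (Sum.inr ⟨j, i⟩) =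
          (∑ e ∈ G.edgeFinset with c e = j, x e) / w j := by
        unfold load
        rw [sum_sigma, sum_filter, sum_div]
        refine sum_congr rfl fun e _ => ?_
        by_cases hj : c e = j
        · subst hj
          simp [I, y]
        · have : ¬ j = c e := fun h => hj h.symm
          simp [I, hj, this]
      rw [h1, div_le_one (hw0 j)]
      exact hcol j
  obtain ⟨M, hMA, hMd, hMs⟩ := exists_disjoint_triples I μ hμ _ _ A y rfl rfl hI hμI hy hl
  have htotal : ∑ p ∈ A, y p = ∑ e ∈ G.edgeFinset, x e := by
    rw [sum_sigma]
    exact sum_congr rfl fun e _ => hspread e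
  have hV : ∀ p ∈ M, ∀ q ∈ M, p ≠ q → ∀ v, v ∈ p.1 → v ∉ q.1 := by
    intro p hp q hq hpq v hvp hvq
    exact disjoint_left.mp (hMd p hp q hq hpq) (show Sum.inl v ∈ I p by simpa [I] using hvp)
      (by simpa [I] using hvq)
  have hinj : Set.InjOn Sigma.fst (M : Set (Σ e : Sym2 V, Fin (w (c e)))) := by
    intro p hp q hq hpq
    by_contra hne
    have hv := p.1.out_fst_mem
    exact hV p hp q hq hne _ hv (hpq ▸ hv)
  refine ⟨M.image Sigma.fst, ?_, ?_, ?_, ?_⟩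
  · intro e he
    obtain ⟨p, hp, rfl⟩ := mem_image.mp he
    exact (hA p).mp (hMA hp)
  · intro e he f hf hef
    obtain ⟨p, hp, rfl⟩ := mem_image.mp he
    obtain ⟨q, hq, rfl⟩ := mem_image.mp hf
    exact hV p hp q hq fun h => hef (by rw [h])
  · -- Distinct chosen triples of color `j` use distinct copies of `j`.
    intro j
    rw [filter_image]
    refine card_image_le.trans ?_
    let g : (Σ e : Sym2 V, Fin (w (c e))) → (Σ j : Fin k, Fin (w j)) := fun p => ⟨c p.1, p.2⟩
    have hg : Set.InjOn g ({p ∈ M | c p.1 = j} : Finset _) := by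
      intro p hp q hq hpq
      simp only [coe_filter, Set.mem_ofPred_eq] at hp hq
      by_contra hne
      refine disjoint_left.mp (hMd p hp.1 q hq.1 hne) (show Sum.inr (g p) ∈ I p by simp [I, g]) ?_
      rw [hpq]
      simp [I, g]
    rw [← card_image_of_injOn hg]
    calc _ ≤ #(({j} : Finset (Fin k)).sigma fun j => (univ : Finset (Fin (w j)))) := by
          refine card_le_card fun s hs => ?_
          obtain ⟨p, hp, rfl⟩ := mem_image.mp hs
          simpa [g] using (mem_filter.mp hp).2
      _ = w j := by simp
  · rw [card_image_of_injOn hinj]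
    linarith
end

section
/- Let G = (V, E) be a finite simple undirected graph with edge colors and all color bounds w_j = 1, and let α ≥ 4 be an integer. Let x : E → [0, 1] satisfy Σ_{e∈δ(v)} x_e ≤ 1 for all v ∈ V, Σ_{e∈E(S)} x_e ≤ (|S| − 1)/2 for every odd-cardinality subset S ⊆ V, and Σ_{e∈E_j} x_e ≤ 1 for all colors j. Then there exists a matching M ⊆ E such that |M ∩ E_j| ≤ α for every color j and |M| ≥ (1 − 4/α) · Σ_{e∈E} x_e. -/
/-! ### Matchings and closed vertex sets -/

section Aux

set_option linter.unusedSectionVars false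

variable {V : Type*} [DecidableEq V]

/-- No edge of `M` joins `S` to its complement. -/
def ClosedUnder (M : Finset (Sym2 V)) (S : Finset V) : Prop :=
  ∀ e ∈ M, ∀ v ∈ e, v ∈ S → ∀ w ∈ e, w ∈ S

/-- `M` with its edges inside `S` replaced by the edges of `N` inside `S`. -/
def swapOn (M N : Finset (Sym2 V)) (S : Finset V) : Finset (Sym2 V) :=
  (M \ S.sym2) ∪ (N ∩ S.sym2)

lemma IsMatchingSet.mono {M N : Finset (Sym2 V)} (h : IsMatchingSet N) (hMN : M ⊆ N) :
    IsMatchingSet M :=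
  fun e he f hf => h e (hMN he) f (hMN hf)

/-- A loopless matching covers two vertices per edge. -/
lemma card_cover {M : Finset (Sym2 V)} (hM : IsMatchingSet M) (hd : ∀ e ∈ M, ¬ e.IsDiag) :
    (M.biUnion Sym2.toFinset).card = 2 * M.card := by
  rw [Finset.card_biUnion, Finset.sum_congr rfl
    (fun e he => Sym2.card_toFinset_of_not_isDiag e (hd e he))]
  · simp [mul_comm]
  · intro e he f hf hef
    refine Finset.disjoint_left.2 fun v hv hv' => ?_
    rw [Sym2.mem_toFinset] at hv hv'
    exact hM e he f hf hef v hv hv'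

lemma two_mul_card_inside_add_le {M : Finset (Sym2 V)} (hM : IsMatchingSet M)
    (hd : ∀ e ∈ M, ¬ e.IsDiag) (S T : Finset V) (hT : T ⊆ S)
    (hmiss : ∀ v ∈ T, ∀ e ∈ M, v ∉ e) :
    2 * (M ∩ S.sym2).card + T.card ≤ S.card := by
  rw [← card_cover (hM.mono Finset.inter_subset_left)
    (fun e he => hd e (Finset.mem_inter.1 he).1), ← Finset.card_union_of_disjoint]
  · apply Finset.card_le_card
    intro v hv
    rcases Finset.mem_union.1 hv with hv | hv
    · simp only [Finset.mem_biUnion, Finset.mem_inter, Sym2.mem_toFinset,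
        Finset.mem_sym2_iff] at hv
      obtain ⟨e, ⟨-, h⟩, hve⟩ := hv
      exact h v hve
    · exact hT hv
  · rw [Finset.disjoint_left]
    intro v hv hvT
    simp only [Finset.mem_biUnion, Finset.mem_inter, Sym2.mem_toFinset] at hv
    obtain ⟨e, ⟨he, -⟩, hve⟩ := hv
    exact hmiss v hvT e he hve

lemma card_le_two_mul_card_inside {M : Finset (Sym2 V)} (hM : IsMatchingSet M)
    (hd : ∀ e ∈ M, ¬ e.IsDiag) (S : Finset V) (hS : ClosedUnder M S) :
    S.card ≤ 2 * (M ∩ S.sym2).card + (S.filter (fun v => ∀ e ∈ M, v ∉ e)).card := by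
  rw [← card_cover (hM.mono Finset.inter_subset_left)
    (fun e he => hd e (Finset.mem_inter.1 he).1)]
  refine le_trans (Finset.card_le_card ?_) (Finset.card_union_le _ _)
  intro v hv
  by_cases h : ∀ e ∈ M, v ∉ e
  · exact Finset.mem_union_right _ (Finset.mem_filter.2 ⟨hv, h⟩)
  · push Not at h
    obtain ⟨e, he, hve⟩ := h
    refine Finset.mem_union_left _ (Finset.mem_biUnion.2 ⟨e, Finset.mem_inter.2 ⟨he, ?_⟩, ?_⟩)
    · exact Finset.mem_sym2_iff.2 (hS e he v hve hv)
    · exact Sym2.mem_toFinset.2 hve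

lemma mem_swapOn {M N : Finset (Sym2 V)} {S : Finset V} {e : Sym2 V} :
    e ∈ swapOn M N S ↔ (e ∈ M ∧ e ∉ S.sym2) ∨ (e ∈ N ∧ e ∈ S.sym2) := by
  simp [swapOn]

lemma isMatchingSet_swapOn {M N : Finset (Sym2 V)} (hM : IsMatchingSet M)
    (hN : IsMatchingSet N) {S : Finset V} (hS : ClosedUnder M S) :
    IsMatchingSet (swapOn M N S) := by
  intro e he f hf hef v hve hvf
  rw [mem_swapOn] at he hf
  rcases he with ⟨he, heS⟩ | ⟨he, heS⟩ <;> rcases hf with ⟨hf, hfS⟩ | ⟨hf, hfS⟩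
  · exact hM e he f hf hef v hve hvf
  · exact heS (Finset.mem_sym2_iff.2 (hS e he v hve (Finset.mem_sym2_iff.1 hfS v hvf)))
  · exact hfS (Finset.mem_sym2_iff.2 (hS f hf v hvf (Finset.mem_sym2_iff.1 heS v hve)))
  · exact hN e he f hf hef v hve hvf

lemma card_swapOn (M N : Finset (Sym2 V)) (S : Finset V) :
    (swapOn M N S).card + (M ∩ S.sym2).card = M.card + (N ∩ S.sym2).card := by
  rw [swapOn, Finset.card_union_of_disjoint]
  · have := Finset.card_sdiff_add_card_inter M S.sym2
    omega
  · rw [Finset.disjoint_left]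
    intro e he he'
    exact (Finset.mem_sdiff.1 he).2 (Finset.mem_inter.1 he').2

variable [Fintype V]

lemma sum_eq_sum_fibers {Q R : Type*} [Fintype Q] [DecidableEq Q] [AddCommMonoid R] (π : V → Q)
    (F : Finset (Sym2 V)) (hF : ∀ e ∈ F, ∀ v ∈ e, ∀ w ∈ e, π v = π w) (f : Sym2 V → R) :
    ∑ e ∈ F, f e =
      ∑ q, ∑ e ∈ F ∩ (Finset.univ.filter (fun v => π v = q)).sym2, f e := by
  rw [← Finset.sum_fiberwise F (fun e => π e.out.1) f]
  refine Finset.sum_congr rfl fun q _ => Finset.sum_congr ?_ fun _ _ => rfl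
  ext e
  simp only [Finset.mem_filter, Finset.mem_inter, Finset.mem_sym2_iff, Finset.mem_univ, true_and]
  constructor
  · rintro ⟨he, rfl⟩
    exact ⟨he, fun v hv => hF e he v hv _ (Sym2.out_fst_mem e)⟩
  · rintro ⟨he, h⟩
    exact ⟨he, h _ (Sym2.out_fst_mem e)⟩

lemma card_eq_sum_fibers {Q : Type*} [Fintype Q] [DecidableEq Q] (π : V → Q)
    (F : Finset (Sym2 V)) (hF : ∀ e ∈ F, ∀ v ∈ e, ∀ w ∈ e, π v = π w) :
    F.card = ∑ q, (F ∩ (Finset.univ.filter (fun v => π v = q)).sym2).card := by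
  simpa using sum_eq_sum_fibers π F hF (fun _ => (1 : ℕ))

/-- The map sending a vertex to a representative of its connected component in the graph with edge
set `F`: edges lie inside fibers, and a fiber has at most one more vertex than it has edges. -/
lemma exists_component_map (F : Finset (Sym2 V)) :
    ∃ π : V → V, (∀ e ∈ F, ∀ v ∈ e, ∀ w ∈ e, π v = π w) ∧
      ∀ q, (Finset.univ.filter (fun v => π v = q)).card ≤
        (F ∩ (Finset.univ.filter (fun v => π v = q)).sym2).card + 1 := by
  classical
  let H := SimpleGraph.fromEdgeSet (F : Set (Sym2 V))
  have hinj : ∀ v w, (H.connectedComponentMk v).out = (H.connectedComponentMk w).out ↔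
      H.connectedComponentMk v = H.connectedComponentMk w := 
    fun v w =>
      ⟨fun h => (Quot.out_eq _).symm.trans ((congrArg _ h).trans (Quot.out_eq _)),
        fun h => by rw [h]⟩
  refine ⟨fun v => (H.connectedComponentMk v).out, ?_, ?_⟩
  · intro e he v hv w hw
    by_cases hvw : v = w
    · rw [hvw]
    · refine (hinj v w).2 (SimpleGraph.ConnectedComponent.sound (SimpleGraph.Adj.reachable ?_))
      rw [SimpleGraph.fromEdgeSet_adj]
      have : e = s(v, w) := (Sym2.mem_and_mem_iff hvw).1 ⟨hv, hw⟩
      exact ⟨by simpa [this] using he, hvw⟩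
  · intro q
    set S := Finset.univ.filter (fun v => (H.connectedComponentMk v).out = q) with hS
    rcases S.eq_empty_or_nonempty with h0 | ⟨v, hv⟩
    · simp [h0]
    have hvq : (H.connectedComponentMk v).out = q := by simpa [hS] using hv
    let C := H.connectedComponentMk v
    have hSC : ∀ w, w ∈ S ↔ w ∈ C.supp := by
      intro w
      simp only [hS, Finset.mem_filter, Finset.mem_univ, true_and, ← hvq, hinj,
        SimpleGraph.ConnectedComponent.mem_supp_iff, C]
    have h1 := C.connected_toSimpleGraph.card_vert_le_card_edgeSet_add_one
    have h2 : Nat.card C = S.card := by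
      rw [← Nat.card_eq_finsetCard]
      exact Nat.card_congr (Equiv.subtypeEquivRight fun w => (hSC w).symm)
    have h3 : Nat.card C.toSimpleGraph.edgeSet ≤ (F ∩ S.sym2).card := by
      rw [← Nat.card_eq_finsetCard]
      refine Nat.card_le_card_of_injective (fun e => ⟨e.1.map Subtype.val, ?_⟩) ?_
      · obtain ⟨e, he⟩ := e
        induction e using Sym2.ind with
        | _ a b =>
          have hab : H.Adj a b := he
          rw [SimpleGraph.fromEdgeSet_adj] at hab
          rw [Sym2.map_mk, Finset.mem_inter, Finset.mk_mem_sym2_iff, hSC, hSC]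
          exact ⟨by simpa using hab.1, a.2, b.2⟩
      · intro e f hef
        exact Subtype.ext (Sym2.map.injective Subtype.val_injective (congrArg Subtype.val hef))
    omega

lemma closedUnder_fiber {Q : Type*} [DecidableEq Q] {π : V → Q} {M F : Finset (Sym2 V)}
    (hMF : M ⊆ F) (hF : ∀ e ∈ F, ∀ v ∈ e, ∀ w ∈ e, π v = π w) (q : Q) :
    ClosedUnder M (Finset.univ.filter (fun v => π v = q)) := by
  intro e he v hv hvS w hw
  simp only [Finset.mem_filter, Finset.mem_univ, true_and] at hvS ⊢
  rw [← hvS, hF e (hMF he) w hw v hv]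

/-! ### Maximum matchings and the blossom inequalities -/

/-- `M` is a matching of largest size among those contained in the edge set `F`. -/
def IsMaxMatching (F M : Finset (Sym2 V)) : Prop :=
  M ⊆ F ∧ IsMatchingSet M ∧ ∀ N ⊆ F, IsMatchingSet N → N.card ≤ M.card

/-- Gallai's relation: `u` and `v` are equal, or no maximum matching in `F` misses both. -/
def GallaiRel (F : Finset (Sym2 V)) (u v : V) : Prop :=
  u = v ∨ ∀ M, IsMaxMatching F M → ¬ ((∀ e ∈ M, u ∉ e) ∧ ∀ e ∈ M, v ∉ e)

lemma exists_isMaxMatching (F : Finset (Sym2 V)) : ∃ M, IsMaxMatching F M := by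
  classical
  obtain ⟨M, hM, hmax⟩ := Finset.exists_max_image (F.powerset.filter IsMatchingSet)
    Finset.card ⟨∅, by simp [IsMatchingSet]⟩
  simp only [Finset.mem_filter, Finset.mem_powerset] at hM hmax
  exact ⟨M, hM.1, hM.2, fun N h1 h2 => hmax N ⟨h1, h2⟩⟩

/-- Gallai's relation is transitive through a vertex `v` missed by some maximum matching `N`:
were `u` and `w` both missed by a maximum matching `M`, exchanging `M` for `N` in the component of
`v` shows that `u` and `w` lie in that component, which then has too many vertices. -/
lemma GallaiRel.trans {F : Finset (Sym2 V)} (hd : ∀ e ∈ F, ¬ e.IsDiag) {u v w : V}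
    (hv : ∃ N, IsMaxMatching F N ∧ ∀ e ∈ N, v ∉ e)
    (huv : GallaiRel F u v) (hvw : GallaiRel F v w) : GallaiRel F u w := by
  by_cases huw : u = w
  · exact Or.inl huw
  rcases huv with rfl | huv
  · exact hvw
  rcases hvw with rfl | hvw
  · exact Or.inr huv
  refine Or.inr fun M hM ⟨hu, hw⟩ => ?_
  obtain ⟨N, hN, hNv⟩ := hv
  obtain ⟨π, hπ, hcard⟩ := exists_component_map (M ∪ N)
  have hMS := closedUnder_fiber Finset.subset_union_left hπ (π v)
  have hNS := closedUnder_fiber Finset.subset_union_right hπ (π v)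
  specialize hcard (π v)
  have hvS : v ∈ Finset.univ.filter (fun z => π z = π v) := by simp
  generalize Finset.univ.filter (fun z => π z = π v) = S at *
  have hsub : ∀ {A B : Finset (Sym2 V)}, A ⊆ F → B ⊆ F → swapOn A B S ⊆ F :=
    fun hA hB => Finset.union_subset (Finset.sdiff_subset.trans hA)
      (Finset.inter_subset_left.trans hB)
  have c1 := card_swapOn M N S
  have c2 := card_swapOn N M S
  have d1 := hM.2.2 _ (hsub hM.1 hN.1) (isMatchingSet_swapOn hM.2.1 hN.2.1 hMS)
  have d2 := hN.2.2 _ (hsub hN.1 hM.1) (isMatchingSet_swapOn hN.2.1 hM.2.1 hNS)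
  have hmax : IsMaxMatching F (swapOn M N S) :=
    ⟨hsub hM.1 hN.1, isMatchingSet_swapOn hM.2.1 hN.2.1 hMS,
      fun A h1 h2 => (hM.2.2 A h1 h2).trans (by omega)⟩
  have hmv : ∀ e ∈ swapOn M N S, v ∉ e := by
    intro e he hve
    rcases mem_swapOn.1 he with ⟨h, h'⟩ | ⟨h, -⟩
    · exact h' (Finset.mem_sym2_iff.2 (hMS e h v hve hvS))
    · exact hNv e h hve
  have hmz : ∀ z, z ∉ S → (∀ e ∈ M, z ∉ e) → ∀ e ∈ swapOn M N S, z ∉ e := by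
    intro z hz hzM e he hze
    rcases mem_swapOn.1 he with ⟨h, -⟩ | ⟨-, h⟩
    · exact hzM e h hze
    · exact hz (Finset.mem_sym2_iff.1 h z hze)
  have huS : u ∈ S := by
    by_contra h
    exact huv _ hmax ⟨hmz u h hu, hmv⟩
  have hwS : w ∈ S := by
    by_contra h
    exact hvw _ hmax ⟨hmv, hmz w h hw⟩
  have e1 := two_mul_card_inside_add_le hM.2.1 (fun e he => hd e (hM.1 he)) S {u, w}
    (by simp [Finset.insert_subset_iff, huS, hwS])
    (by
      intro z hz
      rcases Finset.mem_insert.1 hz with rfl | hz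
      · exact hu
      · rw [Finset.mem_singleton.1 hz]; exact hw)
  rw [Finset.card_pair huw] at e1
  rw [Finset.union_inter_distrib_right] at hcard
  have e2 := Finset.card_union_le (M ∩ S.sym2) (N ∩ S.sym2)
  omega

/-- The degree and blossom constraints together bound the mass inside `S` by `⌊|S| / 2⌋`. -/
lemma sum_inside_le {F : Finset (Sym2 V)} {x : Sym2 V → ℝ} (hx : ∀ e ∈ F, 0 ≤ x e)
    (hdeg : ∀ v : V, ∑ e ∈ F.filter (fun e => v ∈ e), x e ≤ 1)
    (hblossom : ∀ S : Finset V, Odd S.card →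
      ∑ e ∈ F ∩ S.sym2, x e ≤ ((S.card : ℝ) - 1) / 2) (S : Finset V) (m : ℕ)
    (hS : S.card ≤ 2 * m + 1) : ∑ e ∈ F ∩ S.sym2, x e ≤ m := by
  rcases Nat.even_or_odd S.card with he | ho
  · rcases S.eq_empty_or_nonempty with rfl | ⟨v, hv⟩
    · simp
    -- Deleting one vertex leaves an odd set and costs at most `1`.
    have hcard := Finset.card_erase_add_one hv
    have hodd : Odd (S.erase v).card := by
      rw [← hcard] at he
      exact Nat.not_even_iff_odd.1 (Nat.even_add_one.1 he)
    have h1 := hblossom _ hodd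
    have h2 := hdeg v
    have h3 : ∑ e ∈ F ∩ S.sym2, x e ≤
        ∑ e ∈ (F ∩ (S.erase v).sym2) ∪ F.filter (fun e => v ∈ e), x e := by
      apply Finset.sum_le_sum_of_subset_of_nonneg
      · intro e he
        rw [Finset.mem_inter, Finset.mem_sym2_iff] at he
        by_cases hve : v ∈ e
        · exact Finset.mem_union_right _ (Finset.mem_filter.2 ⟨he.1, hve⟩)
        · refine Finset.mem_union_left _ (Finset.mem_inter.2 ⟨he.1, Finset.mem_sym2_iff.2 ?_⟩)
          exact fun w hw => Finset.mem_erase.2 ⟨fun h => hve (h ▸ hw), he.2 w hw⟩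
      · intro e he _
        rcases Finset.mem_union.1 he with h | h
        · exact hx e (Finset.mem_inter.1 h).1
        · exact hx e (Finset.mem_filter.1 h).1
    have h4 := Finset.sum_union_inter (f := x) (s₁ := F ∩ (S.erase v).sym2)
      (s₂ := F.filter (fun e => v ∈ e))
    have h5 : 0 ≤ ∑ e ∈ (F ∩ (S.erase v).sym2) ∩ F.filter (fun e => v ∈ e), x e :=
      Finset.sum_nonneg fun e he => hx e (Finset.mem_filter.1 (Finset.mem_inter.1 he).2).1
    have h6 : (S.erase v).card + 1 ≤ 2 * m := by
      obtain ⟨r, hr⟩ := he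
      omega
    have h7 : ((S.erase v).card : ℝ) + 1 ≤ 2 * m := by exact_mod_cast h6
    linarith
  · have h1 := hblossom S ho
    have h2 : (S.card : ℝ) ≤ 2 * m + 1 := by exact_mod_cast hS
    linarith

/-- A point of the matching polytope is dominated in total mass by some matching. -/
lemma exists_matching_ge (F : Finset (Sym2 V)) (hd : ∀ e ∈ F, ¬ e.IsDiag) (x : Sym2 V → ℝ)
    (hx : ∀ e ∈ F, 0 ≤ x e)
    (hdeg : ∀ v : V, ∑ e ∈ F.filter (fun e => v ∈ e), x e ≤ 1)
    (hblossom : ∀ S : Finset V, Odd S.card →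
      ∑ e ∈ F ∩ S.sym2, x e ≤ ((S.card : ℝ) - 1) / 2) :
    ∃ N ⊆ F, IsMatchingSet N ∧ ∑ e ∈ F, x e ≤ N.card := by
  classical
  induction F using Finset.strongInduction with
  | H F ih =>
  obtain ⟨M, hM⟩ := exists_isMaxMatching F
  by_cases hess : ∀ v : V, ∃ N, IsMaxMatching F N ∧ ∀ e ∈ N, v ∉ e
  · let st : Setoid V :=
      { r := GallaiRel F
        iseqv :=
          { refl := fun _ => Or.inl rfl
            symm := fun h => h.elim (fun h => Or.inl h.symm)
              (fun h => Or.inr fun M hM hh => h M hM ⟨hh.2, hh.1⟩)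
            trans := fun {_ v _} h h' => h.trans hd (hess v) h' } }
    have hF : ∀ e ∈ F, ∀ v ∈ e, ∀ w ∈ e, (Quotient.mk st v) = Quotient.mk st w := by
      intro e he v hv w hw
      refine Quotient.sound ?_
      by_cases hvw : v = w
      · exact Or.inl hvw
      refine Or.inr fun M hM ⟨h1, h2⟩ => ?_
      have hevw : e = s(v, w) := (Sym2.mem_and_mem_iff hvw).1 ⟨hv, hw⟩
      have heM : e ∉ M := fun h => h1 e h hv
      -- An edge between two missed vertices could be added to `M`.
      have hmiss : ∀ z ∈ e, ∀ f ∈ M, z ∉ f := by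
        intro z hz
        rw [hevw, Sym2.mem_iff] at hz
        rcases hz with rfl | rfl
        · exact h1
        · exact h2
      have := hM.2.2 (insert e M) (Finset.insert_subset he hM.1) (by
        intro f hf g hg hfg z hzf hzg
        rcases Finset.mem_insert.1 hf with hf | hf <;>
          rcases Finset.mem_insert.1 hg with hg | hg
        · exact hfg (hf.trans hg.symm)
        · exact hmiss z (hf ▸ hzf) g hg hzg
        · exact hmiss z (hg ▸ hzg) f hf hzf
        · exact hM.2.1 f hf g hg hfg z hzf hzg)
      rw [Finset.card_insert_of_notMem heM] at this
      omega
    refine ⟨M, hM.1, hM.2.1, ?_⟩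
    rw [sum_eq_sum_fibers (Quotient.mk st) F hF x, card_eq_sum_fibers (Quotient.mk st) M
      (fun e he => hF e (hM.1 he)), Nat.cast_sum]
    refine Finset.sum_le_sum fun q _ => sum_inside_le hx hdeg hblossom _ _ ?_
    refine (card_le_two_mul_card_inside hM.2.1 (fun e he => hd e (hM.1 he)) _
      (closedUnder_fiber hM.1 hF q)).trans (Nat.add_le_add_left (Finset.card_le_one.2 ?_) _)
    intro a ha b hb
    simp only [Finset.mem_filter, Finset.mem_univ, true_and] at ha hb
    have hab : GallaiRel F a b := Quotient.exact (s := st) (ha.1.trans hb.1.symm)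
    rcases hab with h | h
    · exact h
    · exact absurd ⟨ha.2, hb.2⟩ (h M hM)
  · push Not at hess
    obtain ⟨v, hv⟩ := hess
    have hlt : F.filter (fun e => v ∉ e) ⊂ F := by
      obtain ⟨e, he, hve⟩ := hv M hM
      exact Finset.filter_ssubset.2 ⟨e, hM.1 he, not_not.2 hve⟩
    have hsub := hlt.subset
    have hmono : ∀ A B : Finset (Sym2 V), A ⊆ B → B ⊆ F → ∑ e ∈ A, x e ≤ ∑ e ∈ B, x e :=
      fun A B hAB hBF =>
        Finset.sum_le_sum_of_subset_of_nonneg hAB fun e he _ => hx e (hBF he)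
    obtain ⟨N, hNF, hN, hNx⟩ := ih _ hlt (fun e he => hd e (hsub he))
      (fun e he => hx e (hsub he))
      (fun w => (hmono _ _ (Finset.filter_subset_filter _ hsub)
        (Finset.filter_subset _ _)).trans (hdeg w))
      (fun S hS => (hmono _ _ (Finset.inter_subset_inter_right hsub)
        Finset.inter_subset_left).trans (hblossom S hS))
    refine ⟨M, hM.1, hM.2.1, ?_⟩
    -- `N` misses `v`, hence is not maximum.
    have hlt' : N.card < M.card := by
      by_contra hge
      obtain ⟨e, he, hve⟩ := hv N ⟨hNF.trans hsub, hN,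
        fun A h1 h2 => (hM.2.2 A h1 h2).trans (not_lt.1 hge)⟩
      exact (Finset.mem_filter.1 (hNF he)).2 hve
    have h1 : (N.card : ℝ) + 1 ≤ M.card := by exact_mod_cast hlt'
    have h2 := Finset.sum_filter_add_sum_filter_not F (fun e => v ∈ e) x
    have h3 := hdeg v
    linarith

/-! ### Exchanging along components -/

/-- If exchanging `M` for `N` inside a closed vertex set never gains an edge unless `N` has at
least `L` edges there, then `L (|N| - |M|) ≤ |N|`. -/
lemma mul_card_le_of_exchange {M N : Finset (Sym2 V)} (hN : IsMatchingSet N)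
    (hd : ∀ e ∈ N, ¬ e.IsDiag) (L : ℕ)
    (hex : ∀ S : Finset V, ClosedUnder M S → (N ∩ S.sym2).card < L →
      (N ∩ S.sym2).card ≤ (M ∩ S.sym2).card) :
    L * N.card ≤ L * M.card + N.card := by
  obtain ⟨π, hπ, hcard⟩ := exists_component_map (M ∪ N)
  have hπM : ∀ e ∈ M, ∀ v ∈ e, ∀ w ∈ e, π v = π w :=
    fun e he => hπ e (Finset.mem_union_left _ he)
  have hπN : ∀ e ∈ N, ∀ v ∈ e, ∀ w ∈ e, π v = π w :=
    fun e he => hπ e (Finset.mem_union_right _ he)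
  rw [card_eq_sum_fibers π M hπM, card_eq_sum_fibers π N hπN, Finset.mul_sum, Finset.mul_sum,
    ← Finset.sum_add_distrib]
  refine Finset.sum_le_sum fun q _ => ?_
  have hMS := closedUnder_fiber (Finset.Subset.refl M) hπM q
  specialize hcard q
  generalize Finset.univ.filter (fun z => π z = q) = S at *
  rcases lt_or_ge (N ∩ S.sym2).card L with h | h
  · exact (Nat.mul_le_mul_left L (hex S hMS h)).trans (Nat.le_add_right _ _)
  · have e1 := two_mul_card_inside_add_le hN hd S ∅ (by simp) (by simp)
    rw [Finset.union_inter_distrib_right] at hcard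
    have e2 := Finset.card_union_le (M ∩ S.sym2) (N ∩ S.sym2)
    simp only [Finset.card_empty] at e1
    have e3 : (N ∩ S.sym2).card ≤ (M ∩ S.sym2).card + 1 := by omega
    calc L * (N ∩ S.sym2).card ≤ L * ((M ∩ S.sym2).card + 1) := Nat.mul_le_mul_left L e3
      _ = L * (M ∩ S.sym2).card + L := by ring
      _ ≤ _ := Nat.add_le_add_left h _

end Aux

theorem one_bcm_general_asymptotic {V : Type*} [Fintype V] [DecidableEq V]
    (G : SimpleGraph V) [DecidableRel G.Adj]
    (k : ℕ) (c : Sym2 V → Fin k)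
    (α : ℕ) (hα : 4 ≤ α)
    (x : Sym2 V → ℝ) (hx : ∀ e ∈ G.edgeFinset, 0 ≤ x e ∧ x e ≤ 1)
    (hdeg : ∀ v : V, ∑ e ∈ G.edgeFinset.filter (fun e => v ∈ e), x e ≤ 1)
    (hblossom : ∀ S : Finset V, Odd S.card →
      ∑ e ∈ G.edgeFinset ∩ S.sym2, x e ≤ ((S.card : ℝ) - 1) / 2)
    (hcol : ∀ j : Fin k, ∑ e ∈ G.edgeFinset.filter (fun e => c e = j), x e ≤ 1) :
    ∃ M ⊆ G.edgeFinset, IsMatchingSet M ∧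
      (∀ j : Fin k, (M.filter (fun e => c e = j)).card ≤ α) ∧
      (1 - 4 / (α : ℝ)) * ∑ e ∈ G.edgeFinset, x e ≤ (M.card : ℝ) := by
  classical
  set E := G.edgeFinset with hE
  have hEd : ∀ e ∈ E, ¬ e.IsDiag := fun e he =>
    G.not_isDiag_of_mem_edgeSet (SimpleGraph.mem_edgeFinset.1 he)
  obtain ⟨M, hM, hmax⟩ := Finset.exists_max_image
    (E.powerset.filter (fun M => IsMatchingSet M ∧
      ∀ j : Fin k, (M.filter (fun e => c e = j)).card ≤ α))
    Finset.card ⟨∅, Finset.mem_filter.2 ⟨by simp, by simp [IsMatchingSet], by simp⟩⟩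
  simp only [Finset.mem_filter, Finset.mem_powerset] at hM hmax
  obtain ⟨hME, hMm, hMα⟩ := hM
  refine ⟨M, hME, hMm, hMα, ?_⟩
  have hα0 : (0 : ℝ) < α := by exact_mod_cast (by omega : 0 < α)
  have hs0 : 0 ≤ ∑ e ∈ E, x e := Finset.sum_nonneg fun e he => (hx e he).1
  rcases le_or_gt (∑ e ∈ E, x e) (M.card : ℝ) with hle | hgt
  · have : 0 ≤ 4 / (α : ℝ) * ∑ e ∈ E, x e := by positivity
    linarith
  set t := (α + 1) / 2 with ht
  let J : Finset (Fin k) := Finset.univ.filter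
    (fun j => t ≤ (M.filter (fun e => c e = j)).card)
  let F := E.filter (fun e => c e ∉ J)
  have hFE : F ⊆ E := Finset.filter_subset _ _
  have hJ : J.card * t ≤ M.card := by
    rw [Finset.card_eq_sum_card_fiberwise (f := c) (t := Finset.univ) (by simp)]
    calc J.card * t = ∑ j ∈ J, t := by simp
      _ ≤ ∑ j ∈ J, (M.filter (fun e => c e = j)).card :=
        Finset.sum_le_sum fun j hj => (Finset.mem_filter.1 hj).2
      _ ≤ _ := Finset.sum_le_sum_of_subset (Finset.subset_univ _)
  have hheavy : ∑ e ∈ E.filter (fun e => c e ∈ J), x e ≤ J.card := by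
    rw [← Finset.sum_fiberwise_of_maps_to (s := E.filter (fun e => c e ∈ J)) (t := J) (g := c)
      (fun e he => (Finset.mem_filter.1 he).2)]
    calc _ ≤ ∑ j ∈ J, (1 : ℝ) := by
          refine Finset.sum_le_sum fun j _ => le_trans ?_ (hcol j)
          exact Finset.sum_le_sum_of_subset_of_nonneg
            (Finset.filter_subset_filter _ (Finset.filter_subset _ _))
            fun e he _ => (hx e (Finset.mem_filter.1 he).1).1
      _ = J.card := by simp
  have hsplit := Finset.sum_filter_add_sum_filter_not E (fun e => c e ∈ J) x
  have hmono : ∀ A B : Finset (Sym2 V), A ⊆ B → B ⊆ E → ∑ e ∈ A, x e ≤ ∑ e ∈ B, x e :=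
    fun A B hAB hBE =>
      Finset.sum_le_sum_of_subset_of_nonneg hAB fun e he _ => (hx e (hBE he)).1
  obtain ⟨N, hNF, hN, hNx⟩ := exists_matching_ge F (fun e he => hEd e (hFE he)) x
    (fun e he => (hx e (hFE he)).1)
    (fun w => (hmono _ _ (Finset.filter_subset_filter _ hFE)
      (Finset.filter_subset _ _)).trans (hdeg w))
    (fun S hS => (hmono _ _ (Finset.inter_subset_inter_right hFE)
      Finset.inter_subset_left).trans (hblossom S hS))
  have hex := mul_card_le_of_exchange (M := M) hN (fun e he => hEd e (hFE (hNF he)))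
    (α - t + 2) (by
      intro S hS hlt
      by_contra! hgain
      have hc := card_swapOn M N S
      have := hmax (swapOn M N S)
        ⟨Finset.union_subset (Finset.sdiff_subset.trans hME)
          (Finset.inter_subset_left.trans (hNF.trans hFE)),
          isMatchingSet_swapOn hMm hN hS, fun j => ?_⟩
      · omega
      · by_cases hj : j ∈ J
        -- `N` has no edge of a heavy color.
        · refine le_trans (Finset.card_le_card ?_) (hMα j)
          intro e he
          rw [Finset.mem_filter, mem_swapOn] at he
          rcases he with ⟨⟨h, -⟩ | ⟨h, -⟩, hcj⟩
          · exact Finset.mem_filter.2 ⟨h, hcj⟩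
          · exact absurd (hcj ▸ hj) (Finset.mem_filter.1 (hNF h)).2
        -- `M` has at most `t - 1` edges of a light color, and at most `α - t + 1` are added.
        · have hjt : (M.filter (fun e => c e = j)).card < t := by
            simpa [J] using hj
          have hsub : (swapOn M N S).filter (fun e => c e = j) ⊆
              M.filter (fun e => c e = j) ∪ (N ∩ S.sym2) := by
            intro e he
            rw [Finset.mem_filter, mem_swapOn] at he
            rcases he with ⟨⟨h, -⟩ | h, hcj⟩
            · exact Finset.mem_union_left _ (Finset.mem_filter.2 ⟨h, hcj⟩)
            · exact Finset.mem_union_right _ (Finset.mem_inter.2 h)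
          have := (Finset.card_le_card hsub).trans (Finset.card_union_le _ _)
          omega)
  have hL : (α : ℝ) ≤ 2 * ((α - t + 2 : ℕ) : ℝ) := by
    exact_mod_cast (by omega : α ≤ 2 * (α - t + 2))
  have ht2 : (α : ℝ) ≤ 2 * (t : ℝ) := by exact_mod_cast (by omega : α ≤ 2 * t)
  generalize α - t + 2 = L at *
  have hex' : (L : ℝ) * N.card ≤ L * M.card + N.card := by exact_mod_cast hex
  have hJ' : (J.card : ℝ) * t ≤ M.card := by exact_mod_cast hJ
  have hJα : (J.card : ℝ) * α ≤ 2 * M.card := by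
    nlinarith [Nat.cast_nonneg (α := ℝ) J.card]
  have hNge : ∑ e ∈ E, x e - J.card ≤ N.card := by
    change ∑ e ∈ E.filter (fun e => c e ∉ J), x e ≤ _ at hNx
    linarith
  have hMN : ((α : ℝ) - 2) * N.card ≤ α * M.card := by
    rcases le_total (N.card : ℝ) M.card with h | h
    · nlinarith [Nat.cast_nonneg (α := ℝ) N.card]
    · nlinarith [mul_le_mul_of_nonneg_right hL (sub_nonneg.2 h)]
  have hα2 : (0 : ℝ) ≤ α - 2 := by
    have : (4 : ℝ) ≤ α := by exact_mod_cast hα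
    linarith
  have hfinal : (α - 2 : ℝ) * (α - 2) * ∑ e ∈ E, x e ≤ α * α * M.card := by
    have h1 := mul_le_mul_of_nonneg_left hNge hα2
    have h2 := mul_le_mul_of_nonneg_left (h1.trans hMN) hα0.le
    have h3 := mul_le_mul_of_nonneg_left
      (hJα.trans (mul_le_mul_of_nonneg_left hgt.le zero_le_two)) hα2
    linarith
  have hrw : (1 - 4 / (α : ℝ)) * ∑ e ∈ E, x e =
      (α * (α - 4) * ∑ e ∈ E, x e) / (α * α) := by
    field_simp
  rw [hrw, div_le_iff₀ (by positivity)]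
  linarith
end
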